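/- arXiv:1109.4774 — 2 statements merged into one kernel-verified Lean document; each statement's English description precedes it below -/
import Mathlib

section
/- Let g be a seven-dimensional real Lie algebra with a six-dimensional abelian ideal u and let e₇ ∈ g∖u. Then the following are equivalent: (i) there exists a closed four-form Ψ ∈ Λ⁴g* such that for some basis f¹,…,f⁷ of g*, Ψ = f^{1234}−f^{1256}−f^{3456}−f^{2467}+f^{2357}+f^{1457}+f^{1367} (i.e. g admits a cocalibrated G₂*-structure); (ii) there exists a closed four-form Ω ∈ Λ⁴Ann(span(e₇)) of length l(Ω) ≥ 2. -/
open Module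

section AltMachinery

variable {F : Type*} [Field F] {V : Type*} [AddCommGroup V] [Module F V]

/-- The wedge `φ₁ ∧ … ∧ φ_m` of `m` covectors, as an alternating `m`-form on `V`:
`(φ₁ ∧ … ∧ φ_m)(v₁,…,v_m) = det (φ_i (v_j))`. -/
noncomputable def wedgeCov (m : ℕ) (φ : Fin m → Module.Dual F V) :
    V [⋀^Fin m]→ₗ[F] F :=
  (Matrix.detRowAlternating : (Fin m → F) [⋀^Fin m]→ₗ[F] F).compLinearMap
    (LinearMap.pi φ)

/-- A decomposable alternating `m`-form: a wedge of `m` covectors. -/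
def AltDec (m : ℕ) (X : V [⋀^Fin m]→ₗ[F] F) : Prop :=
  ∃ φ : Fin m → Module.Dual F V, X = wedgeCov m φ

/-- The `m`-form `X` is a sum of `l` decomposable `m`-forms. -/
def AltLenLE (m l : ℕ) (X : V [⋀^Fin m]→ₗ[F] F) : Prop :=
  ∃ Y : Fin l → (V [⋀^Fin m]→ₗ[F] F), (∀ i, AltDec m (Y i)) ∧ X = ∑ i, Y i

/-- The `m`-form `X` has length `l`: it is a sum of `l` decomposable `m`-forms and of no
smaller number of them. -/
def AltHasLen (m l : ℕ) (X : V [⋀^Fin m]→ₗ[F] F) : Prop :=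
  AltLenLE m l X ∧ ∀ j < l, ¬ AltLenLE m j X

end AltMachinery

section CE

variable {F : Type*} [Field F] {g : Type*} [LieRing g] [LieAlgebra F g]

/-- The Chevalley–Eilenberg differential of a `(k+1)`-form (given as a function on tuples):
`(dρ)(x₀,…,x_{k+1}) = ∑_{i<j} (-1)^{i+j} ρ(⁅x_i,x_j⁆, x₀,…,x̂_i,…,x̂_j,…,x_{k+1})`. -/
noncomputable def ceDiff (k : ℕ) (ρ : (Fin (k + 1) → g) → F) : (Fin (k + 2) → g) → F :=
  fun x => ∑ i : Fin (k + 2), ∑ j : Fin (k + 2),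
    if h : (i : ℕ) < (j : ℕ) then
      (-1 : F) ^ ((i : ℕ) + (j : ℕ)) *
        ρ (Fin.cons ⁅x i, x j⁆ fun l : Fin k =>
            x (j.succAbove ((⟨(i : ℕ),
              Nat.lt_of_lt_of_le h (Nat.lt_succ_iff.mp j.isLt)⟩ : Fin (k + 1)).succAbove l)))
    else 0

end CE

section G2Forms

variable {F : Type*} [Field F] {g : Type*} [AddCommGroup g] [Module F g]

/-- The wedge `f^i ∧ f^j ∧ f^k ∧ f^l` of four covectors from the basis `b` of `g*`. -/
noncomputable def bw (b : Basis (Fin 7) F (Module.Dual F g)) (i j k l : Fin 7) :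
    g [⋀^Fin 4]→ₗ[F] F :=
  wedgeCov 4 ![b i, b j, b k, b l]

/-- The four-form `f^{1234}+f^{1256}+f^{3456}-f^{2467}+f^{2357}+f^{1457}+f^{1367}` (the
Hodge dual of a `G₂`- resp. `(G₂)_ℂ`-structure), written with `0`-based indices. -/
noncomputable def stdG2 (b : Basis (Fin 7) F (Module.Dual F g)) : g [⋀^Fin 4]→ₗ[F] F :=
  bw b 0 1 2 3 + bw b 0 1 4 5 + bw b 2 3 4 5 - bw b 1 3 5 6 +
    bw b 1 2 4 6 + bw b 0 3 4 6 + bw b 0 2 5 6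

/-- The four-form `f^{1234}-f^{1256}-f^{3456}-f^{2467}+f^{2357}+f^{1457}+f^{1367}` (the
Hodge dual of a `G₂*`-structure), written with `0`-based indices. -/
noncomputable def stdG2star (b : Basis (Fin 7) F (Module.Dual F g)) :
    g [⋀^Fin 4]→ₗ[F] F :=
  bw b 0 1 2 3 - bw b 0 1 4 5 - bw b 2 3 4 5 - bw b 1 3 5 6 +
    bw b 1 2 4 6 + bw b 0 3 4 6 + bw b 0 2 5 6

/-- Membership in `Λ⁴W ⊆ Λ⁴g*` for a subspace `W ⊆ g*`: the span of the wedges of four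
covectors from `W`. -/
def mem4Pow (W : Submodule F (Module.Dual F g)) (Ω : g [⋀^Fin 4]→ₗ[F] F) : Prop :=
  Ω ∈ Submodule.span F
    {Y : g [⋀^Fin 4]→ₗ[F] F |
      ∃ φ : Fin 4 → Module.Dual F g, (∀ i, φ i ∈ W) ∧ Y = wedgeCov 4 φ}

end G2Forms


theorem w4 {V : Type*} [AddCommGroup V] [Module ℝ V] (a b c d : Module.Dual ℝ V) (x : Fin 4 → V) :
    wedgeCov 4 ![a, b, c, d] x =
      a (x 0) * (b (x 1) * (c (x 2) * d (x 3) - c (x 3) * d (x 2))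
        - b (x 2) * (c (x 1) * d (x 3) - c (x 3) * d (x 1))
        + b (x 3) * (c (x 1) * d (x 2) - c (x 2) * d (x 1)))
      - a (x 1) * (b (x 0) * (c (x 2) * d (x 3) - c (x 3) * d (x 2))
        - b (x 2) * (c (x 0) * d (x 3) - c (x 3) * d (x 0))
        + b (x 3) * (c (x 0) * d (x 2) - c (x 2) * d (x 0)))
      + a (x 2) * (b (x 0) * (c (x 1) * d (x 3) - c (x 3) * d (x 1))
        - b (x 1) * (c (x 0) * d (x 3) - c (x 3) * d (x 0))
        + b (x 3) * (c (x 0) * d (x 1) - c (x 1) * d (x 0)))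
      - a (x 3) * (b (x 0) * (c (x 1) * d (x 2) - c (x 2) * d (x 1))
        - b (x 1) * (c (x 0) * d (x 2) - c (x 2) * d (x 0))
        + b (x 2) * (c (x 0) * d (x 1) - c (x 1) * d (x 0))) := by
  have : wedgeCov 4 ![a, b, c, d] x
      = Matrix.det (Matrix.of fun i j => (![a, b, c, d] : Fin 4 → Module.Dual ℝ V) j (x i)) := rfl
  rw [this]
  simp [Matrix.det_succ_row_zero, Fin.sum_univ_succ, Fin.succAbove]
  ring

theorem ext15 {V : Type*} [AddCommGroup V] [Module ℝ V] (e : Basis (Fin 6) ℝ V)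
    (A B : V [⋀^Fin 4]→ₗ[ℝ] ℝ)
    (h : ∀ i j k l : Fin 6, i < j → j < k → k < l →
      A ![e i, e j, e k, e l] = B ![e i, e j, e k, e l]) : A = B := by
  refine Basis.ext_alternating e fun v hv => ?_
  have hs : StrictMono (v ∘ Tuple.sort v) :=
    (Tuple.monotone_sort v).strictMono_of_injective (hv.comp (Tuple.sort v).injective)
  have key := h (v (Tuple.sort v 0)) (v (Tuple.sort v 1)) (v (Tuple.sort v 2)) (v (Tuple.sort v 3))
    (hs (by decide)) (hs (by decide)) (hs (by decide))
  have hx : ![e (v (Tuple.sort v 0)), e (v (Tuple.sort v 1)), e (v (Tuple.sort v 2)),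
      e (v (Tuple.sort v 3))] = (fun i => e (v i)) ∘ Tuple.sort v := by
    funext i; fin_cases i <;> rfl
  rw [hx, AlternatingMap.map_perm, AlternatingMap.map_perm] at key
  rcases Int.units_eq_one_or (Equiv.Perm.sign (Tuple.sort v)) with h1 | h1 <;>
    simpa [h1] using key

set_option synthInstance.maxSize 2000 in
set_option synthInstance.maxHeartbeats 400000 in
set_option maxRecDepth 100000 in
theorem enum15 : ∀ i j k l : Fin 6, i < j → j < k → k < l →
    (i = 2 ∧ j = 3 ∧ k = 4 ∧ l = 5) ∨ (i = 0 ∧ j = 1) ∨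
    ((i = 0 ∨ i = 1) ∧ ((j = 2 ∧ k = 3 ∧ l = 4) ∨ (j = 2 ∧ k = 3 ∧ l = 5) ∨
      (j = 2 ∧ k = 4 ∧ l = 5) ∨ (j = 3 ∧ k = 4 ∧ l = 5))) := by
  decide

theorem enum6 : ∀ k l : Fin 6, 1 < k → k < l →
    (k = 2 ∧ l = 3) ∨ (k = 2 ∧ l = 4) ∨ (k = 2 ∧ l = 5) ∨ (k = 3 ∧ l = 4) ∨ (k = 3 ∧ l = 5) ∨
      (k = 4 ∧ l = 5) := by
  decide

section
variable {V : Type*} [AddCommGroup V] [Module ℝ V] (A : V [⋀^Fin 4]→ₗ[ℝ] ℝ)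

theorem add0 (x y a b c : V) : A ![x + y, a, b, c] = A ![x, a, b, c] + A ![y, a, b, c] := by
  have h (x : V) : Function.update ![0, a, b, c] 0 x = ![x, a, b, c] := by
    funext i; fin_cases i <;> rfl
  simpa only [h] using A.map_update_add ![0, a, b, c] 0 x y
theorem smul0 (r : ℝ) (y a b c : V) : A ![r • y, a, b, c] = r * A ![y, a, b, c] := by
  have h (x : V) : Function.update ![0, a, b, c] 0 x = ![x, a, b, c] := by
    funext i; fin_cases i <;> rfl
  simpa only [h, smul_eq_mul] using A.map_update_smul ![0, a, b, c] 0 r y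
theorem sw01 (a b c d : V) : A ![b, a, c, d] = - A ![a, b, c, d] := by
  rw [← A.map_swap ![a, b, c, d] (show (0 : Fin 4) ≠ 1 by decide)]
  congr 1; funext i; fin_cases i <;> rfl
theorem sw12 (a b c d : V) : A ![a, c, b, d] = - A ![a, b, c, d] := by
  rw [← A.map_swap ![a, b, c, d] (show (1 : Fin 4) ≠ 2 by decide)]
  congr 1; funext i; fin_cases i <;> rfl
theorem sw23 (a b c d : V) : A ![a, b, d, c] = - A ![a, b, c, d] := by
  rw [← A.map_swap ![a, b, c, d] (show (2 : Fin 4) ≠ 3 by decide)]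
  congr 1; funext i; fin_cases i <;> rfl
theorem add1 (x y a b c : V) : A ![a, x + y, b, c] = A ![a, x, b, c] + A ![a, y, b, c] := by
  rw [sw01, add0, sw01 A a, sw01 A a]; ring
theorem smul1 (r : ℝ) (y a b c : V) : A ![a, r • y, b, c] = r * A ![a, y, b, c] := by
  rw [sw01, smul0, sw01 A a]; ring
theorem add2 (x y a b c : V) : A ![a, b, x + y, c] = A ![a, b, x, c] + A ![a, b, y, c] := by
  rw [sw12, add1, sw12 A a b, sw12 A a b]; ring
theorem smul2 (r : ℝ) (y a b c : V) : A ![a, b, r • y, c] = r * A ![a, b, y, c] := by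
  rw [sw12, smul1, sw12 A a b]; ring
theorem add3 (x y a b c : V) : A ![a, b, c, x + y] = A ![a, b, c, x] + A ![a, b, c, y] := by
  rw [sw23, add2, sw23 A a b c, sw23 A a b c]; ring
theorem smul3 (r : ℝ) (y a b c : V) : A ![a, b, c, r • y] = r * A ![a, b, c, y] := by
  rw [sw23, smul2, sw23 A a b c]; ring
theorem z01 (a b c : V) : A ![a, a, b, c] = 0 := by
  have := sw01 A a a b c; linarith
theorem z12 (a b c : V) : A ![b, a, a, c] = 0 := by
  have := sw12 A b a a c; linarith
theorem z23 (a b c : V) : A ![b, c, a, a] = 0 := by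
  have := sw23 A b c a a; linarith
theorem z02 (a b c : V) : A ![a, b, a, c] = 0 := by
  rw [sw12, z01, neg_zero]
theorem z13 (a b c : V) : A ![b, a, c, a] = 0 := by
  rw [sw23, z12, neg_zero]
theorem z03 (a b c : V) : A ![a, b, c, a] = 0 := by
  rw [sw23, z02, neg_zero]
end

section
variable {V : Type*} [AddCommGroup V] [Module ℝ V]

/-- adapted vectors form a basis -/
theorem adBasis (hV : finrank ℝ V = 6) (A : V [⋀^Fin 4]→ₗ[ℝ] ℝ) (p q a b c d : V)
    (hl : LinearIndependent ℝ ![p, q]) (hA : A ![a, b, c, d] ≠ 0)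
    (hp1 : A ![p, b, c, d] = 0) (hp2 : A ![p, a, c, d] = 0) (hp3 : A ![p, a, b, d] = 0)
    (hp4 : A ![p, a, b, c] = 0)
    (hq1 : A ![q, b, c, d] = 0) (hq2 : A ![q, a, c, d] = 0) (hq3 : A ![q, a, b, d] = 0)
    (hq4 : A ![q, a, b, c] = 0) :
    ∃ e : Basis (Fin 6) ℝ V, e 0 = p ∧ e 1 = q ∧ e 2 = a ∧ e 3 = b ∧ e 4 = c ∧ e 5 = d := by
  have hli : LinearIndependent ℝ ![p, q, a, b, c, d] := by
    rw [Fintype.linearIndependent_iff]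
    intro g hg
    simp only [Fin.sum_univ_six] at hg
    have hg' : g 0 • p + (g 1 • q + (g 2 • a + (g 3 • b + (g 4 • c + g 5 • d)))) = 0 := by
      rw [← hg]; simp [add_assoc]
    have z (x y z : V) : A ![0, x, y, z] = 0 := by
      have := smul0 A 0 0 x y z; simpa using this
    have h2 := z b c d
    have h3 := z a c d
    have h4 := z a b d
    have h5 := z a b c
    rw [← hg'] at h2 h3 h4 h5
    simp only [add0, smul0, z01, z02, z03, hp1, hp2, hp3, hp4, hq1, hq2, hq3, hq4, mul_zero,
      zero_add, add_zero] at h2 h3 h4 h5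
    rw [sw01 A a b c d] at h3
    rw [sw01 A a c b d, sw12 A a b c d] at h4
    rw [sw01 A a d b c, sw12 A a b d c, sw23 A a b c d] at h5
    have e2 : g 2 = 0 := by simpa [hA] using h2
    have e3 : g 3 = 0 := by simpa [hA] using h3
    have e4 : g 4 = 0 := by simpa [hA] using h4
    have e5 : g 5 = 0 := by simpa [hA] using h5
    rw [e2, e3, e4, e5] at hg'
    have h01 := Fintype.linearIndependent_iff.1 hl ![g 0, g 1] (by simpa using hg')
    have e0 : g 0 = 0 := h01 0
    have e1 : g 1 = 0 := h01 1
    intro i; fin_cases i <;> assumption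
  have : Nonempty (Fin 6) := ⟨0⟩
  refine ⟨basisOfLinearIndependentOfCardEqFinrank hli (by simp [hV]), ?_⟩
  simp

/-- expansion -/
theorem expand4 (A : V [⋀^Fin 4]→ₗ[ℝ] ℝ) (e : Basis (Fin 6) ℝ V)
    (h : ∀ i : Fin 6, (i = 0 ∨ i = 1) → A ![e i, e 3, e 4, e 5] = 0 ∧ A ![e i, e 2, e 4, e 5] = 0 ∧
      A ![e i, e 2, e 3, e 5] = 0 ∧ A ![e i, e 2, e 3, e 4] = 0)
    (h24 : A ![e 0, e 1, e 2, e 4] = 0) (h25 : A ![e 0, e 1, e 2, e 5] = 0)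
    (h34 : A ![e 0, e 1, e 3, e 4] = 0) (h35 : A ![e 0, e 1, e 3, e 5] = 0) :
    A = A ![e 2, e 3, e 4, e 5] • wedgeCov 4 ![e.coord 2, e.coord 3, e.coord 4, e.coord 5]
      + A ![e 0, e 1, e 2, e 3] • wedgeCov 4 ![e.coord 0, e.coord 1, e.coord 2, e.coord 3]
      + A ![e 0, e 1, e 4, e 5] • wedgeCov 4 ![e.coord 0, e.coord 1, e.coord 4, e.coord 5] := by
  refine ext15 e _ _ fun i j k l hij hjk hkl => ?_
  rcases enum15 i j k l hij hjk hkl with ⟨rfl, rfl, rfl, rfl⟩ | ⟨rfl, rfl⟩ | ⟨hi, hh⟩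
  · simp [w4]
  · rcases enum6 k l hjk hkl with ⟨rfl, rfl⟩ | ⟨rfl, rfl⟩ | ⟨rfl, rfl⟩ | ⟨rfl, rfl⟩ | ⟨rfl, rfl⟩ |
      ⟨rfl, rfl⟩ <;> simp [w4, *]
  · obtain ⟨h1, h2, h3, h4⟩ := h i hi
    rcases hi with rfl | rfl <;>
    rcases hh with ⟨rfl, rfl, rfl⟩ | ⟨rfl, rfl, rfl⟩ | ⟨rfl, rfl, rfl⟩ | ⟨rfl, rfl, rfl⟩ <;>
    simp [w4, *]
end

section
variable {V : Type*} [AddCommGroup V] [Module ℝ V]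

theorem perm3 (A : V [⋀^Fin 4]→ₗ[ℝ] ℝ) {p x y z : V} (h : A ![p, x, y, z] = 0) :
    A ![p, x, z, y] = 0 ∧ A ![p, y, x, z] = 0 ∧ A ![p, y, z, x] = 0 ∧ A ![p, z, x, y] = 0 ∧
      A ![p, z, y, x] = 0 := by
  have h1 := sw23 A p x y z
  have h2 := sw12 A p x y z
  have h3 := sw23 A p y x z
  have h4 := sw12 A p x z y
  have h5 := sw23 A p z x y
  refine ⟨?_, ?_, ?_, ?_, ?_⟩ <;> linarith

/-- the normal form -/
def NF (A : V [⋀^Fin 4]→ₗ[ℝ] ℝ) : Prop :=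
  ∃ (e : Basis (Fin 6) ℝ V) (l n m : ℝ), l ≠ 0 ∧ n ≠ 0 ∧
    A = l • wedgeCov 4 ![e.coord 2, e.coord 3, e.coord 4, e.coord 5]
      + n • wedgeCov 4 ![e.coord 0, e.coord 1, e.coord 2, e.coord 3]
      + m • wedgeCov 4 ![e.coord 0, e.coord 1, e.coord 4, e.coord 5]

theorem nfStep (hV : finrank ℝ V = 6) (A : V [⋀^Fin 4]→ₗ[ℝ] ℝ) (p q a b c d : V)
    (hl : LinearIndependent ℝ ![p, q]) (hA : A ![a, b, c, d] ≠ 0)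
    (hp1 : A ![p, b, c, d] = 0) (hp2 : A ![p, a, c, d] = 0) (hp3 : A ![p, a, b, d] = 0)
    (hp4 : A ![p, a, b, c] = 0)
    (hq1 : A ![q, b, c, d] = 0) (hq2 : A ![q, a, c, d] = 0) (hq3 : A ![q, a, b, d] = 0)
    (hq4 : A ![q, a, b, c] = 0) (hs : A ![p, q, a, b] ≠ 0) : NF A := by
  have P1 := perm3 A hp1
  have P2 := perm3 A hp2
  have P3 := perm3 A hp3
  have P4 := perm3 A hp4
  have Q1 := perm3 A hq1
  have Q2 := perm3 A hq2
  have Q3 := perm3 A hq3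
  have Q4 := perm3 A hq4
  have hba := sw23 A p q a b
  obtain ⟨c', hc'⟩ : ∃ c', c' = c + ((A ![p, q, b, c] / A ![p, q, a, b]) • a +
    (-A ![p, q, a, c] / A ![p, q, a, b]) • b) := ⟨_, rfl⟩
  obtain ⟨d', hd'⟩ : ∃ d', d' = d + ((A ![p, q, b, d] / A ![p, q, a, b]) • a +
    (-A ![p, q, a, d] / A ![p, q, a, b]) • b) := ⟨_, rfl⟩
  have hA' : A ![a, b, c', d'] ≠ 0 := by
    rw [hc', hd']
    simpa only [add2, add3, smul2, smul3, z01, z02, z03, z12, z13, z23, mul_zero, add_zero] using hA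
  have G (r : V) (R1 : A ![r, b, c, d] = 0) (R2 : A ![r, a, c, d] = 0) (R3 : A ![r, a, b, d] = 0)
      (R4 : A ![r, a, b, c] = 0) : A ![r, b, c', d'] = 0 ∧ A ![r, a, c', d'] = 0 ∧
        A ![r, a, b, d'] = 0 ∧ A ![r, a, b, c'] = 0 := by
    have P1 := perm3 A R1
    have P2 := perm3 A R2
    have P3 := perm3 A R3
    have P4 := perm3 A R4
    rw [hc', hd']
    simp only [add2, add3, smul2, smul3, z01, z02, z03, z12, z13, z23, mul_zero, add_zero,
      R1, R2, R3, R4, P1, P2, P3, P4, and_self]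
  have gp := G p hp1 hp2 hp3 hp4
  have gq := G q hq1 hq2 hq3 hq4
  have s1 : A ![p, q, a, c'] = 0 := by
    rw [hc']; simp only [add3, smul3, z23]; field_simp; ring
  have s2 : A ![p, q, a, d'] = 0 := by
    rw [hd']; simp only [add3, smul3, z23]; field_simp; ring
  have s3 : A ![p, q, b, c'] = 0 := by
    rw [hc']; simp only [add3, smul3, z23, hba]; field_simp; ring
  have s4 : A ![p, q, b, d'] = 0 := by
    rw [hd']; simp only [add3, smul3, z23, hba]; field_simp; ring
  obtain ⟨e, rfl, rfl, rfl, rfl, rfl, rfl⟩ := adBasis hV A p q a b c' d' hl hA' gp.1 gp.2.1 gp.2.2.1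
    gp.2.2.2 gq.1 gq.2.1 gq.2.2.1 gq.2.2.2
  refine ⟨e, _, _, _, hA', hs, expand4 A e ?_ s1 s2 s3 s4⟩
  rintro i (rfl | rfl)
  · exact gp
  · exact gq

def lin3 (A : V [⋀^Fin 4]→ₗ[ℝ] ℝ) (b c d : V) : V →ₗ[ℝ] ℝ where
  toFun x := A ![x, b, c, d]
  map_add' x y := add0 A x y b c d
  map_smul' r x := smul0 A r x b c d

theorem normalForm (hV : finrank ℝ V = 6) (A : V [⋀^Fin 4]→ₗ[ℝ] ℝ) (hA : ¬ AltDec 4 A) :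
    NF A := by
  have hfd : FiniteDimensional ℝ V := FiniteDimensional.of_finrank_pos (by omega)
  obtain ⟨v, hv⟩ : ∃ v, A v ≠ 0 := by
    by_contra! h
    refine hA ⟨![0, 0, 0, 0], ?_⟩
    ext x
    rw [h x, w4]; simp
  obtain ⟨a, b, c, d, habcd⟩ : ∃ a b c d, A ![a, b, c, d] ≠ 0 := by
    refine ⟨v 0, v 1, v 2, v 3, ?_⟩
    have : ![v 0, v 1, v 2, v 3] = v := by funext i; fin_cases i <;> rfl
    rwa [this]
  obtain ⟨p, q, hl, hp1, hp2, hp3, hp4, hq1, hq2, hq3, hq4⟩ : ∃ p q : V,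
      LinearIndependent ℝ ![p, q] ∧ A ![p, b, c, d] = 0 ∧ A ![p, a, c, d] = 0 ∧
      A ![p, a, b, d] = 0 ∧ A ![p, a, b, c] = 0 ∧ A ![q, b, c, d] = 0 ∧ A ![q, a, c, d] = 0 ∧
      A ![q, a, b, d] = 0 ∧ A ![q, a, b, c] = 0 := by
    let L : V →ₗ[ℝ] (Fin 4 → ℝ) :=
      LinearMap.pi ![lin3 A b c d, lin3 A a c d, lin3 A a b d, lin3 A a b c]
    have hL (x : V) (hx : L x = 0) : A ![x, b, c, d] = 0 ∧ A ![x, a, c, d] = 0 ∧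
        A ![x, a, b, d] = 0 ∧ A ![x, a, b, c] = 0 :=
      ⟨congrFun hx 0, congrFun hx 1, congrFun hx 2, congrFun hx 3⟩
    have h1 := L.finrank_range_add_finrank_ker
    have h2 : finrank ℝ L.range ≤ 4 := by simpa using L.range.finrank_le
    have h3 : 1 < finrank ℝ L.ker := by omega
    have : Nontrivial L.ker := nontrivial_of_finrank_pos (R := ℝ) (by omega)
    obtain ⟨p, hp⟩ := exists_ne (0 : L.ker)
    obtain ⟨q, hq⟩ := exists_linearIndependent_pair_of_one_lt_finrank h3 hp
    have hq' := hq.map' L.ker.subtype (Submodule.ker_subtype _)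
    have : L.ker.subtype ∘ ![p, q] = ![(p : V), (q : V)] := by
      funext i; fin_cases i <;> rfl
    rw [this] at hq'
    obtain ⟨a1, a2, a3, a4⟩ := hL p p.2
    exact ⟨p, q, hq', a1, a2, a3, a4, hL q q.2⟩
  have P1 := perm3 A hp1
  have P2 := perm3 A hp2
  have P3 := perm3 A hp3
  have P4 := perm3 A hp4
  have Q1 := perm3 A hq1
  have Q2 := perm3 A hq2
  have Q3 := perm3 A hq3
  have Q4 := perm3 A hq4
  by_cases h1 : A ![p, q, a, b] = 0
  swap
  · exact nfStep hV A p q a b c d hl habcd hp1 hp2 hp3 hp4 hq1 hq2 hq3 hq4 h1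
  by_cases h2 : A ![p, q, a, c] = 0
  swap
  · refine nfStep hV A p q a c b d hl ?_ ?_ ?_ ?_ ?_ ?_ ?_ ?_ ?_ h2 <;> try simp only [*]
    rw [sw12 A a b c d]; simpa
  by_cases h3 : A ![p, q, a, d] = 0
  swap
  · refine nfStep hV A p q a d b c hl ?_ ?_ ?_ ?_ ?_ ?_ ?_ ?_ ?_ h3 <;> try simp only [*]
    rw [sw12 A a b d c, sw23 A a b c d]; simpa
  by_cases h4 : A ![p, q, b, c] = 0
  swap
  · refine nfStep hV A p q b c a d hl ?_ ?_ ?_ ?_ ?_ ?_ ?_ ?_ ?_ h4 <;> try simp only [*]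
    rw [sw12 A b a c d, sw01 A a b c d]; simpa
  by_cases h5 : A ![p, q, b, d] = 0
  swap
  · refine nfStep hV A p q b d a c hl ?_ ?_ ?_ ?_ ?_ ?_ ?_ ?_ ?_ h5 <;> try simp only [*]
    rw [sw12 A b a d c, sw01 A a b d c, sw23 A a b c d]; simpa
  by_cases h6 : A ![p, q, c, d] = 0
  swap
  · refine nfStep hV A p q c d a b hl ?_ ?_ ?_ ?_ ?_ ?_ ?_ ?_ ?_ h6 <;> try simp only [*]
    rw [sw12 A c a d b, sw01 A a c d b, sw23 A a c b d, sw12 A a b c d]; simpa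
  exfalso
  obtain ⟨e, rfl, rfl, rfl, rfl, rfl, rfl⟩ := adBasis hV A p q a b c d hl habcd hp1 hp2 hp3 hp4
    hq1 hq2 hq3 hq4
  have := expand4 A e (by rintro i (rfl | rfl) <;> simp only [*, and_self]) h2 h3 h4 h5
  rw [h1, h6] at this
  refine hA ⟨![A ![e 2, e 3, e 4, e 5] • e.coord 2, e.coord 3, e.coord 4, e.coord 5], ?_⟩
  nth_rw 1 [this]
  ext x
  simp only [zero_smul, add_zero, AlternatingMap.smul_apply, w4, LinearMap.smul_apply, smul_eq_mul]
  ring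
end

theorem cons4 {g : Type*} (z : g) (f : Fin 3 → g) :
    (Fin.cons z f : Fin 4 → g) = ![z, f 0, f 1, f 2] := by
  funext i; fin_cases i <;> rfl

section
variable {g : Type*} [LieRing g] [LieAlgebra ℝ g]

theorem ceDiff3 (A : g [⋀^Fin 4]→ₗ[ℝ] ℝ) (x : Fin 5 → g) : ceDiff 3 ⇑A x =
    - A ![⁅x 0, x 1⁆, x 2, x 3, x 4] + A ![⁅x 0, x 2⁆, x 1, x 3, x 4]
    - A ![⁅x 0, x 3⁆, x 1, x 2, x 4] + A ![⁅x 0, x 4⁆, x 1, x 2, x 3]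
    - A ![⁅x 1, x 2⁆, x 0, x 3, x 4] + A ![⁅x 1, x 3⁆, x 0, x 2, x 4]
    - A ![⁅x 1, x 4⁆, x 0, x 2, x 3] - A ![⁅x 2, x 3⁆, x 0, x 1, x 4]
    + A ![⁅x 2, x 4⁆, x 0, x 1, x 3] - A ![⁅x 3, x 4⁆, x 0, x 1, x 2] := by
  simp only [ceDiff, cons4]
  simp [Fin.sum_univ_five, Fin.succAbove]
  ring

theorem closed0 (u : LieIdeal ℝ g) (habel : ∀ x ∈ u, ∀ y ∈ u, ⁅x, y⁆ = (0 : g)) (e : g)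
    (hdec : ∀ x : g, ∃ y ∈ u, ∃ c : ℝ, x = y + c • e) (A : g [⋀^Fin 4]→ₗ[ℝ] ℝ)
    (hA : ∀ x ∈ u, ∀ y ∈ u, ∀ z ∈ u, ∀ w ∈ u, A ![x, y, z, w] = 0) : ceDiff 3 ⇑A = 0 := by
  funext x
  choose y hy c hx using fun i => hdec (x i)
  have hE (z : g) (hz : z ∈ u) (i j k : Fin 5) : A ![z, x i, x j, x k] =
      c i * A ![z, e, y j, y k] - c j * A ![z, e, y i, y k] + c k * A ![z, e, y i, y j] := by
    rw [hx i, hx j, hx k]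
    simp only [add1, add2, add3, smul1, smul2, smul3, z12, z13, z23, hA z hz _ (hy i) _ (hy j) _ (hy k)]
    rw [sw12 A z e (y i) (y k), sw23 A z (y i) e (y j), sw12 A z e (y i) (y j)]
    ring
  have hD (i : Fin 5) : ⁅e, y i⁆ ∈ u := lie_mem_right ℝ g u e (y i) (hy i)
  have hB (i j : Fin 5) : ⁅x i, x j⁆ = c i • ⁅e, y j⁆ + (-c j) • ⁅e, y i⁆ := by
    rw [hx i, hx j]
    simp only [lie_add, add_lie, lie_smul, smul_lie, lie_self, habel _ (hy i) _ (hy j), smul_zero,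
      zero_add, add_zero]
    rw [← lie_skew e (y i)]
    module
  have hF (i j k l m : Fin 5) : A ![⁅x i, x j⁆, x k, x l, x m] =
      c i * (c k * A ![⁅e, y j⁆, e, y l, y m] - c l * A ![⁅e, y j⁆, e, y k, y m]
        + c m * A ![⁅e, y j⁆, e, y k, y l])
      - c j * (c k * A ![⁅e, y i⁆, e, y l, y m] - c l * A ![⁅e, y i⁆, e, y k, y m]
        + c m * A ![⁅e, y i⁆, e, y k, y l]) := by
    rw [hB, add0, smul0, smul0, hE _ (hD j), hE _ (hD i)]; ring
  rw [ceDiff3]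
  simp only [hF, Pi.zero_apply]
  ring

theorem closedAgree (u : LieIdeal ℝ g) (habel : ∀ x ∈ u, ∀ y ∈ u, ⁅x, y⁆ = (0 : g)) (e : g)
    (hdec : ∀ x : g, ∃ y ∈ u, ∃ c : ℝ, x = y + c • e) (A B : g [⋀^Fin 4]→ₗ[ℝ] ℝ)
    (hA : ∀ x ∈ u, ∀ y ∈ u, ∀ z ∈ u, ∀ w ∈ u, A ![x, y, z, w] = B ![x, y, z, w])
    (h : ceDiff 3 ⇑A = 0) : ceDiff 3 ⇑B = 0 := by
  have h0 := closed0 u habel e hdec (A - B) (by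
    intro x hx y hy z hz w hw
    simp [hA x hx y hy z hz w hw])
  funext x
  have h1 := congrFun h0 x
  have h2 := congrFun h x
  rw [ceDiff3] at h1 h2
  rw [ceDiff3]
  simp only [AlternatingMap.sub_apply, Pi.zero_apply] at h1 h2 ⊢
  linarith
end


set_option maxHeartbeats 1000000 in
theorem g2nondeg {g : Type*} [AddCommGroup g] [Module ℝ g] [FiniteDimensional ℝ g]
    (b : Basis (Fin 7) ℝ (Module.Dual ℝ g)) (F : Module.Dual ℝ g) (e : g) (he : F e = 1) (x : g)
    (H : ∀ y1 y2 y3, F y1 = 0 → F y2 = 0 → F y3 = 0 → stdG2star b ![x, y1, y2, y3] = 0) :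
    x = 0 := by
  obtain ⟨E, hE⟩ : ∃ E : Fin 7 → g, ∀ i j, b i (E j) = if i = j then 1 else 0 := by
    refine ⟨fun j => (evalEquiv ℝ g).symm (b.coord j), fun i j => ?_⟩
    simp [Finsupp.single_apply]
  obtain ⟨X, hX⟩ : ∃ X : Fin 7 → ℝ, ∀ i, b i x = X i := ⟨_, fun _ => rfl⟩
  obtain ⟨f, hf⟩ : ∃ f : Fin 7 → ℝ, ∀ i, F (E i) = f i := ⟨_, fun _ => rfl⟩
  have W (i j k l : Fin 7) : f i * stdG2star b ![x, E j, E k, E l]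
      - f j * stdG2star b ![x, E i, E k, E l] + f k * stdG2star b ![x, E i, E j, E l]
      - f l * stdG2star b ![x, E i, E j, E k] = 0 := by
    generalize hA : stdG2star b = A at *
    have K (i j k : Fin 7) : A ![x, E i, E j, E k] =
      f i * A ![x, e, E j, E k] - f j * A ![x, e, E i, E k] + f k * A ![x, e, E i, E j] := by
      have h := H (E i + (-f i) • e) (E j + (-f j) • e) (E k + (-f k) • e)
        (by simp [hf, he]) (by simp [hf, he]) (by simp [hf, he])
      simp only [add1, add2, add3, smul1, smul2, smul3, z12, z13, z23] at h
      rw [sw12 A x e (E i) (E k), sw23 A x (E i) e (E j), sw12 A x e (E i) (E j)] at h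
      linarith
    have k1 := sw23 A x e (E i) (E j)
    simp only [K]
    ring
  simp only [stdG2star, bw, AlternatingMap.add_apply, AlternatingMap.sub_apply, w4] at W
  simp only [Matrix.cons_val, hX, hE] at W
  have h0123 : (1) * (X 0 * f 0) + (1) * (X 1 * f 1) + (1) * (X 2 * f 2) + (1) * (X 3 * f 3) = 0 := by
    have h := W 0 1 2 3; simp at h; linarith
  have h0124 : (1) * (X 3 * f 4) + (1) * (X 5 * f 2) + (-1) * (X 6 * f 0) = 0 := by
    have h := W 0 1 2 4; simp at h; linarith
  have h0125 : (1) * (X 3 * f 5) + (-1) * (X 4 * f 2) + (1) * (X 6 * f 1) = 0 := by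
    have h := W 0 1 2 5; simp at h; linarith
  have h0126 : (1) * (X 3 * f 6) + (1) * (X 4 * f 0) + (-1) * (X 5 * f 1) = 0 := by
    have h := W 0 1 2 6; simp at h; linarith
  have h0134 : (-1) * (X 2 * f 4) + (1) * (X 5 * f 3) + (1) * (X 6 * f 1) = 0 := by
    have h := W 0 1 3 4; simp at h; linarith
  have h0135 : (-1) * (X 2 * f 5) + (-1) * (X 4 * f 3) + (1) * (X 6 * f 0) = 0 := by
    have h := W 0 1 3 5; simp at h; linarith
  have h0136 : (-1) * (X 2 * f 6) + (-1) * (X 4 * f 1) + (-1) * (X 5 * f 0) = 0 := by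
    have h := W 0 1 3 6; simp at h; linarith
  have h0145 : (-1) * (X 0 * f 0) + (-1) * (X 1 * f 1) + (-1) * (X 4 * f 4) + (-1) * (X 5 * f 5) = 0 := by
    have h := W 0 1 4 5; simp at h; linarith
  have h0146 : (-1) * (X 2 * f 0) + (1) * (X 3 * f 1) + (-1) * (X 5 * f 6) = 0 := by
    have h := W 0 1 4 6; simp at h; linarith
  have h0156 : (1) * (X 2 * f 1) + (1) * (X 3 * f 0) + (1) * (X 4 * f 6) = 0 := by
    have h := W 0 1 5 6; simp at h; linarith
  have h0234 : (1) * (X 1 * f 4) + (1) * (X 5 * f 0) + (1) * (X 6 * f 2) = 0 := by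
    have h := W 0 2 3 4; simp at h; linarith
  have h0235 : (1) * (X 1 * f 5) + (-1) * (X 4 * f 0) + (-1) * (X 6 * f 3) = 0 := by
    have h := W 0 2 3 5; simp at h; linarith
  have h0236 : (1) * (X 1 * f 6) + (-1) * (X 4 * f 2) + (1) * (X 5 * f 3) = 0 := by
    have h := W 0 2 3 6; simp at h; linarith
  have h0245 : (-1) * (X 1 * f 2) + (1) * (X 3 * f 0) + (-1) * (X 6 * f 4) = 0 := by
    have h := W 0 2 4 5; simp at h; linarith
  have h0246 : (1) * (X 1 * f 0) + (1) * (X 3 * f 2) + (1) * (X 5 * f 4) = 0 := by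
    have h := W 0 2 4 6; simp at h; linarith
  have h0256 : (1) * (X 0 * f 0) + (1) * (X 2 * f 2) + (1) * (X 5 * f 5) + (1) * (X 6 * f 6) = 0 := by
    have h := W 0 2 5 6; simp at h; linarith
  have h0345 : (-1) * (X 1 * f 3) + (-1) * (X 2 * f 0) + (1) * (X 6 * f 5) = 0 := by
    have h := W 0 3 4 5; simp at h; linarith
  have h0346 : (1) * (X 0 * f 0) + (1) * (X 3 * f 3) + (1) * (X 4 * f 4) + (1) * (X 6 * f 6) = 0 := by
    have h := W 0 3 4 6; simp at h; linarith
  have h0356 : (-1) * (X 1 * f 0) + (1) * (X 2 * f 3) + (1) * (X 4 * f 5) = 0 := by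
    have h := W 0 3 5 6; simp at h; linarith
  have h0456 : (-1) * (X 1 * f 6) + (1) * (X 2 * f 4) + (-1) * (X 3 * f 5) = 0 := by
    have h := W 0 4 5 6; simp at h; linarith
  have h1234 : (-1) * (X 0 * f 4) + (1) * (X 5 * f 1) + (-1) * (X 6 * f 3) = 0 := by
    have h := W 1 2 3 4; simp at h; linarith
  have h1235 : (-1) * (X 0 * f 5) + (-1) * (X 4 * f 1) + (-1) * (X 6 * f 2) = 0 := by
    have h := W 1 2 3 5; simp at h; linarith
  have h1236 : (-1) * (X 0 * f 6) + (1) * (X 4 * f 3) + (1) * (X 5 * f 2) = 0 := by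
    have h := W 1 2 3 6; simp at h; linarith
  have h1245 : (1) * (X 0 * f 2) + (1) * (X 3 * f 1) + (1) * (X 6 * f 5) = 0 := by
    have h := W 1 2 4 5; simp at h; linarith
  have h1246 : (1) * (X 1 * f 1) + (1) * (X 2 * f 2) + (1) * (X 4 * f 4) + (1) * (X 6 * f 6) = 0 := by
    have h := W 1 2 4 6; simp at h; linarith
  have h1256 : (1) * (X 0 * f 1) + (-1) * (X 3 * f 2) + (1) * (X 4 * f 5) = 0 := by
    have h := W 1 2 5 6; simp at h; linarith
  have h1345 : (1) * (X 0 * f 3) + (-1) * (X 2 * f 1) + (1) * (X 6 * f 4) = 0 := by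
    have h := W 1 3 4 5; simp at h; linarith
  have h1346 : (1) * (X 0 * f 1) + (1) * (X 2 * f 3) + (-1) * (X 5 * f 4) = 0 := by
    have h := W 1 3 4 6; simp at h; linarith
  have h1356 : (-1) * (X 1 * f 1) + (-1) * (X 3 * f 3) + (-1) * (X 5 * f 5) + (-1) * (X 6 * f 6) = 0 := by
    have h := W 1 3 5 6; simp at h; linarith
  have h1456 : (1) * (X 0 * f 6) + (-1) * (X 2 * f 5) + (-1) * (X 3 * f 4) = 0 := by
    have h := W 1 4 5 6; simp at h; linarith
  have h2345 : (-1) * (X 2 * f 2) + (-1) * (X 3 * f 3) + (-1) * (X 4 * f 4) + (-1) * (X 5 * f 5) = 0 := by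
    have h := W 2 3 4 5; simp at h; linarith
  have h2346 : (1) * (X 0 * f 2) + (-1) * (X 1 * f 3) + (-1) * (X 5 * f 6) = 0 := by
    have h := W 2 3 4 6; simp at h; linarith
  have h2356 : (-1) * (X 0 * f 3) + (-1) * (X 1 * f 2) + (1) * (X 4 * f 6) = 0 := by
    have h := W 2 3 5 6; simp at h; linarith
  have h2456 : (-1) * (X 0 * f 4) + (1) * (X 1 * f 5) + (-1) * (X 3 * f 6) = 0 := by
    have h := W 2 4 5 6; simp at h; linarith
  have h3456 : (1) * (X 0 * f 5) + (1) * (X 1 * f 4) + (1) * (X 2 * f 6) = 0 := by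
    have h := W 3 4 5 6; simp at h; linarith
  have d0 : X 0 * f 0 = 0 := by linear_combination (1/4) * h0123 + (-1/4) * h0145 + (1/4) * h0256 + (1/4) * h0346 + (-1/4) * h1246 + (1/4) * h1356 + (1/4) * h2345
  have d1 : X 1 * f 1 = 0 := by linear_combination (1/4) * h0123 + (-1/4) * h0145 + (-1/4) * h0256 + (-1/4) * h0346 + (1/4) * h1246 + (-1/4) * h1356 + (1/4) * h2345
  have d2 : X 2 * f 2 = 0 := by linear_combination (1/4) * h0123 + (1/4) * h0145 + (1/4) * h0256 + (-1/4) * h0346 + (1/4) * h1246 + (1/4) * h1356 + (-1/4) * h2345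
  have d3 : X 3 * f 3 = 0 := by linear_combination (1/4) * h0123 + (1/4) * h0145 + (-1/4) * h0256 + (1/4) * h0346 + (-1/4) * h1246 + (-1/4) * h1356 + (-1/4) * h2345
  have d4 : X 4 * f 4 = 0 := by linear_combination (-1/4) * h0123 + (-1/4) * h0145 + (-1/4) * h0256 + (1/4) * h0346 + (1/4) * h1246 + (1/4) * h1356 + (-1/4) * h2345
  have d5 : X 5 * f 5 = 0 := by linear_combination (-1/4) * h0123 + (-1/4) * h0145 + (1/4) * h0256 + (-1/4) * h0346 + (-1/4) * h1246 + (-1/4) * h1356 + (-1/4) * h2345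
  have d6 : X 6 * f 6 = 0 := by linear_combination (-1/4) * h0123 + (1/4) * h0145 + (1/4) * h0256 + (1/4) * h0346 + (1/4) * h1246 + (-1/4) * h1356 + (1/4) * h2345
  have o01 : X 0 * f 1 = (-1) * (X 1 * f 0) := by linear_combination (1/2) * h0246 + (-1/2) * h0356 + (1/2) * h1256 + (1/2) * h1346
  have o02 : X 0 * f 2 = (-1) * (X 2 * f 0) := by linear_combination (-1/2) * h0146 + (-1/2) * h0345 + (1/2) * h1245 + (1/2) * h2346
  have o03 : X 0 * f 3 = (-1) * (X 3 * f 0) := by linear_combination (1/2) * h0156 + (1/2) * h0245 + (1/2) * h1345 + (-1/2) * h2356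
  have o04 : X 0 * f 4 = (1) * (X 4 * f 0) := by linear_combination (-1/2) * h0126 + (1/2) * h0235 + (-1/2) * h1234 + (-1/2) * h2456
  have o05 : X 0 * f 5 = (1) * (X 5 * f 0) := by linear_combination (1/2) * h0136 + (-1/2) * h0234 + (-1/2) * h1235 + (1/2) * h3456
  have o06 : X 0 * f 6 = (1) * (X 6 * f 0) := by linear_combination (1/2) * h0124 + (-1/2) * h0135 + (-1/2) * h1236 + (1/2) * h1456
  have o12 : X 1 * f 2 = (-1) * (X 2 * f 1) := by linear_combination (1/2) * h0156 + (-1/2) * h0245 + (-1/2) * h1345 + (-1/2) * h2356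
  have o13 : X 1 * f 3 = (-1) * (X 3 * f 1) := by linear_combination (1/2) * h0146 + (-1/2) * h0345 + (1/2) * h1245 + (-1/2) * h2346
  have o14 : X 1 * f 4 = (1) * (X 4 * f 1) := by linear_combination (1/2) * h0136 + (1/2) * h0234 + (1/2) * h1235 + (1/2) * h3456
  have o15 : X 1 * f 5 = (1) * (X 5 * f 1) := by linear_combination (1/2) * h0126 + (1/2) * h0235 + (-1/2) * h1234 + (1/2) * h2456
  have o16 : X 1 * f 6 = (1) * (X 6 * f 1) := by linear_combination (-1/2) * h0125 + (-1/2) * h0134 + (1/2) * h0236 + (-1/2) * h0456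
  have o23 : X 2 * f 3 = (-1) * (X 3 * f 2) := by linear_combination (1/2) * h0246 + (1/2) * h0356 + (-1/2) * h1256 + (1/2) * h1346
  have o24 : X 2 * f 4 = (1) * (X 4 * f 2) := by linear_combination (1/2) * h0125 + (-1/2) * h0134 + (1/2) * h0236 + (1/2) * h0456
  have o25 : X 2 * f 5 = (1) * (X 5 * f 2) := by linear_combination (-1/2) * h0124 + (-1/2) * h0135 + (-1/2) * h1236 + (-1/2) * h1456
  have o26 : X 2 * f 6 = (1) * (X 6 * f 2) := by linear_combination (-1/2) * h0136 + (-1/2) * h0234 + (1/2) * h1235 + (1/2) * h3456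
  have o34 : X 3 * f 4 = (1) * (X 4 * f 3) := by linear_combination (1/2) * h0124 + (1/2) * h0135 + (-1/2) * h1236 + (-1/2) * h1456
  have o35 : X 3 * f 5 = (1) * (X 5 * f 3) := by linear_combination (1/2) * h0125 + (-1/2) * h0134 + (-1/2) * h0236 + (-1/2) * h0456
  have o36 : X 3 * f 6 = (1) * (X 6 * f 3) := by linear_combination (1/2) * h0126 + (1/2) * h0235 + (1/2) * h1234 + (-1/2) * h2456
  have o45 : X 4 * f 5 = (-1) * (X 5 * f 4) := by linear_combination (1/2) * h0246 + (1/2) * h0356 + (1/2) * h1256 + (-1/2) * h1346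
  have o46 : X 4 * f 6 = (-1) * (X 6 * f 4) := by linear_combination (1/2) * h0156 + (-1/2) * h0245 + (1/2) * h1345 + (1/2) * h2356
  have o56 : X 5 * f 6 = (-1) * (X 6 * f 5) := by linear_combination (-1/2) * h0146 + (1/2) * h0345 + (1/2) * h1245 + (-1/2) * h2346
  clear W
  clear H
  clear h0123 h0124 h0125 h0126 h0134 h0135 h0136 h0145 h0146 h0156 h0234 h0235 h0236 h0245 h0246 h0256 h0345 h0346 h0356 h0456 h1234 h1235 h1236 h1245 h1246 h1256 h1345 h1346 h1356 h1456 h2345 h2346 h2356 h2456 h3456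
  have hj : ∃ j, f j ≠ 0 := by
    by_contra! h
    have : F = 0 := by
      apply b.repr.injective
      ext j
      have h1 := h j
      rw [← hf, ← b.sum_repr F] at h1
      rw [map_zero, Finsupp.zero_apply]
      simpa only [LinearMap.sum_apply, LinearMap.smul_apply, hE, smul_eq_mul, mul_ite, mul_one,
        mul_zero, Finset.sum_ite_eq', Finset.mem_univ, if_true] using h1
    simp [this] at he
  obtain ⟨j, hj⟩ := hj
  have hX0 : ∀ i, X i = 0 := by
    have : X 0 = 0 ∧ X 1 = 0 ∧ X 2 = 0 ∧ X 3 = 0 ∧ X 4 = 0 ∧ X 5 = 0 ∧ X 6 = 0 := by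
      clear hX hE hf he
      fin_cases j <;> simp_all
    obtain ⟨h0, h1, h2, h3, h4, h5, h6⟩ := this
    intro i
    fin_cases i <;> assumption
  rw [← Module.forall_dual_apply_eq_zero_iff ℝ]
  intro φ
  rw [← b.sum_repr φ]
  simp only [LinearMap.sum_apply, LinearMap.smul_apply, hX, hX0, smul_zero, Finset.sum_const_zero]

section
variable {g : Type*} [AddCommGroup g] [Module ℝ g]

theorem mkB (hg : finrank ℝ g = 7) (B : Fin 7 → Module.Dual ℝ g)
    (hB : ∀ c : Fin 7 → ℝ, (∀ x, c 0 * B 0 x + c 1 * B 1 x + c 2 * B 2 x + c 3 * B 3 x + c 4 * B 4 x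
      + c 5 * B 5 x + c 6 * B 6 x = 0) → c 0 = 0 ∧ c 1 = 0 ∧ c 2 = 0 ∧ c 3 = 0 ∧ c 4 = 0 ∧ c 5 = 0
        ∧ c 6 = 0) : ∃ b : Basis (Fin 7) ℝ (Module.Dual ℝ g), ∀ i, b i = B i := by
  have hli : LinearIndependent ℝ B := by
    rw [Fintype.linearIndependent_iff]
    intro c hc
    obtain ⟨h0, h1, h2, h3, h4, h5, h6⟩ := hB c (fun x => by
      have := LinearMap.congr_fun hc x
      simpa [Fin.sum_univ_seven] using this)
    intro i
    fin_cases i <;> assumption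
  refine ⟨basisOfLinearIndependentOfCardEqFinrank hli (by
    rw [Subspace.dual_finrank_eq, hg]; simp), fun i => by simp⟩

theorem exB (hg : finrank ℝ g = 7) (F : Fin 6 → Module.Dual ℝ g) (f : Module.Dual ℝ g)
    (E : Fin 6 → g) (e : g) (h1 : ∀ i j, F i (E j) = if i = j then 1 else 0)
    (h2 : ∀ i, F i e = 0) (h3 : ∀ j, f (E j) = 0) (h4 : f e = 1) (l n m : ℝ) (hl : l ≠ 0)
    (hn : n ≠ 0) : ∃ b : Basis (Fin 7) ℝ (Module.Dual ℝ g), ∀ x : Fin 4 → g, (∀ i, f (x i) = 0) →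
      stdG2star b x = l * wedgeCov 4 ![F 2, F 3, F 4, F 5] x
        + n * wedgeCov 4 ![F 0, F 1, F 2, F 3] x + m * wedgeCov 4 ![F 0, F 1, F 4, F 5] x := by
  rcases eq_or_ne m 0 with rfl | hm
  · obtain ⟨b, hb⟩ := mkB hg ![n • F 0 + f, F 1, F 2 + F 5, F 3 + (-l) • F 4, (-l) • F 4, F 5,
      n • F 0] (by
        intro c hc
        have k0 := hc (E 0)
        have k1 := hc (E 1)
        have k2 := hc (E 2)
        have k3 := hc (E 3)
        have k4 := hc (E 4)
        have k5 := hc (E 5)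
        have k6 := hc e
        simp [h1, h2, h3, h4] at k0 k1 k2 k3 k4 k5 k6
        simp_all)
    refine ⟨b, fun x hx => ?_⟩
    simp only [stdG2star, bw, AlternatingMap.add_apply, AlternatingMap.sub_apply, w4, hb]
    simp [hx]
    ring
  · have hpos : ∀ r : ℝ, 0 < r → ∃ s, s ≠ 0 ∧ s * s = r := fun r hr =>
      ⟨√r, (Real.sqrt_pos.2 hr).ne', Real.mul_self_sqrt hr.le⟩
    have hne : n * m / l ≠ 0 := div_ne_zero (mul_ne_zero hn hm) hl
    rcases hne.lt_or_gt with hlt | hgt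
    · obtain ⟨s, hs, hss⟩ := hpos (-(n * m / l)) (by linarith)
      obtain ⟨t, ht⟩ : ∃ t, t = n / s := ⟨_, rfl⟩
      obtain ⟨v, hv⟩ : ∃ v, v = -m / s := ⟨_, rfl⟩
      have ht0 : t ≠ 0 := by rw [ht]; exact div_ne_zero hn hs
      have hv0 : v ≠ 0 := by rw [hv]; exact div_ne_zero (neg_ne_zero.2 hm) hs
      have en : n = s * t := by rw [ht]; field_simp
      have em : m = -(s * v) := by rw [hv]; field_simp
      have el : l = t * v := by
        have : (l - t * v) * (s * s) = 0 := by
          have a1 : l * (s * s) = -(n * m) := by rw [hss]; field_simp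
          rw [sub_mul, a1, en, em]; ring
        have := (mul_eq_zero.1 this).resolve_right (mul_ne_zero hs hs)
        linarith
      obtain ⟨b, hb⟩ := mkB hg ![f, s • F 0, t • F 2, v • F 4, F 3, F 5, F 1] (by
        intro c hc
        have k0 := hc (E 0)
        have k1 := hc (E 1)
        have k2 := hc (E 2)
        have k3 := hc (E 3)
        have k4 := hc (E 4)
        have k5 := hc (E 5)
        have k6 := hc e
        clear ht hv en em el hss
        simp [h1, h2, h3, h4, hs, ht0, hv0] at k0 k1 k2 k3 k4 k5 k6
        simp [*])
      refine ⟨b, fun x hx => ?_⟩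
      simp only [stdG2star, bw, AlternatingMap.add_apply, AlternatingMap.sub_apply, w4, hb]
      simp [hx]
      rw [en, em, el]
      ring
    · obtain ⟨s, hs, hss⟩ := hpos (n * m / l) hgt
      obtain ⟨t, ht⟩ : ∃ t, t = n / s := ⟨_, rfl⟩
      obtain ⟨v, hv⟩ : ∃ v, v = -m / s := ⟨_, rfl⟩
      have ht0 : t ≠ 0 := by rw [ht]; exact div_ne_zero hn hs
      have hv0 : v ≠ 0 := by rw [hv]; exact div_ne_zero (neg_ne_zero.2 hm) hs
      have en : n = s * t := by rw [ht]; field_simp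
      have em : m = -(s * v) := by rw [hv]; field_simp
      have el : l = -(t * v) := by
        have : (l + t * v) * (s * s) = 0 := by
          have a1 : l * (s * s) = n * m := by rw [hss]; field_simp
          rw [add_mul, a1, en, em]; ring
        have := (mul_eq_zero.1 this).resolve_right (mul_ne_zero hs hs)
        linarith
      obtain ⟨b, hb⟩ := mkB hg ![s • F 0, F 1, t • F 2, F 3, v • F 4, F 5, f] (by
        intro c hc
        have k0 := hc (E 0)
        have k1 := hc (E 1)
        have k2 := hc (E 2)
        have k3 := hc (E 3)
        have k4 := hc (E 4)
        have k5 := hc (E 5)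
        have k6 := hc e
        clear ht hv en em el hss
        simp [h1, h2, h3, h4, hs, ht0, hv0] at k0 k1 k2 k3 k4 k5 k6
        simp [*])
      refine ⟨b, fun x hx => ?_⟩
      simp only [stdG2star, bw, AlternatingMap.add_apply, AlternatingMap.sub_apply, w4, hb]
      simp [hx]
      rw [en, em, el]
      ring
end

theorem wedge_comp {V W : Type*} [AddCommGroup V] [Module ℝ V] [AddCommGroup W] [Module ℝ W]
    (φ : Fin 4 → Module.Dual ℝ W) (P : V →ₗ[ℝ] W) :
    (wedgeCov 4 φ).compLinearMap P = wedgeCov 4 (fun i => φ i ∘ₗ P) := rfl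

/-- Let `g` be a seven-dimensional real Lie algebra with a
six-dimensional abelian ideal `u` and `e₇ ∈ g ∖ u`.  Then `g` admits a cocalibrated
`G₂*`-structure (a closed four-form of the standard type `stdG2star`) iff there is a
closed four-form `Ω ∈ Λ⁴Ann(span e₇)` of length `≥ 2`. -/
theorem stmt14 {g : Type*} [LieRing g] [LieAlgebra ℝ g] [FiniteDimensional ℝ g]
    (hg : finrank ℝ g = 7)
    (u : LieIdeal ℝ g) (habel : ∀ x ∈ u, ∀ y ∈ u, ⁅x, y⁆ = (0 : g))
    (hu : finrank ℝ ↥u = 6) (e₇ : g) (he : e₇ ∉ u) :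
    (∃ Ψ : g [⋀^Fin 4]→ₗ[ℝ] ℝ, ceDiff 3 ⇑Ψ = 0 ∧
        ∃ b : Basis (Fin 7) ℝ (Module.Dual ℝ g), Ψ = stdG2star b) ↔
      (∃ Ω : g [⋀^Fin 4]→ₗ[ℝ] ℝ, ceDiff 3 ⇑Ω = 0 ∧
        mem4Pow (LinearMap.ker (Module.Dual.eval ℝ g e₇)) Ω ∧ ¬ AltLenLE 4 1 Ω) := by
  obtain ⟨U, hU⟩ : ∃ U : Submodule ℝ g, U = u.toSubmodule := ⟨_, rfl⟩
  have hmem (x : g) : x ∈ u ↔ x ∈ U := by rw [hU]; rfl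
  have hU6 : finrank ℝ U = 6 := by rw [hU]; exact hu
  obtain ⟨f, hf7, hfU⟩ : ∃ f : Module.Dual ℝ g, f e₇ = 1 ∧ U ≤ LinearMap.ker f := by
    obtain ⟨f, h1, h2⟩ := Submodule.exists_le_ker_of_notMem (p := U) (v := e₇)
      (by rwa [← hmem])
    refine ⟨(f e₇)⁻¹ • f, by simp [h1], fun x hx => ?_⟩
    have : f x = 0 := h2 hx
    simp [this]
  have hUk : U = LinearMap.ker f := by
    refine Submodule.eq_of_le_of_finrank_le hfU ?_
    have h1 := f.finrank_range_add_finrank_ker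
    have h2 : 0 < finrank ℝ (LinearMap.range f) := by
      rw [Module.finrank_pos_iff_exists_ne_zero]
      exact ⟨⟨f e₇, e₇, rfl⟩, by simp [Subtype.ext_iff, hf7]⟩
    omega
  have hfu (x : g) : x ∈ u ↔ f x = 0 := by rw [hmem, hUk]; rfl
  let P0 : g →ₗ[ℝ] g := LinearMap.id - f.smulRight e₇
  have hP0 (x : g) : P0 x = x - f x • e₇ := rfl
  have hP0U (x : g) : P0 x ∈ U := by
    rw [hUk, LinearMap.mem_ker, hP0]; simp [hf7]
  have hP0id (x : g) (hx : x ∈ u) : P0 x = x := by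
    rw [hP0, (hfu x).1 hx]; simp
  have hP07 : P0 e₇ = 0 := by rw [hP0, hf7]; simp
  let P : g →ₗ[ℝ] U := P0.codRestrict U hP0U
  have hdec : ∀ x : g, ∃ y ∈ u, ∃ c : ℝ, x = y + c • e₇ := fun x =>
    ⟨P0 x, (hmem _).2 (hP0U x), f x, by rw [hP0]; simp⟩
  constructor
  · rintro ⟨_, hcl, b, rfl⟩
    refine ⟨(stdG2star b).compLinearMap P0, ?_, ?_, ?_⟩
    · refine closedAgree u habel e₇ hdec _ _ ?_ hcl
      intro x hx y hy z hz w hw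
      rw [AlternatingMap.compLinearMap_apply]
      congr 1
      funext i
      fin_cases i <;> simp [hP0id x hx, hP0id y hy, hP0id z hz, hP0id w hw]
    · have key (i j k l : Fin 7) : (bw b i j k l).compLinearMap P0 ∈ Submodule.span ℝ
          {Y : g [⋀^Fin 4]→ₗ[ℝ] ℝ | ∃ φ : Fin 4 → Module.Dual ℝ g,
            (∀ i, φ i ∈ LinearMap.ker (Module.Dual.eval ℝ g e₇)) ∧ Y = wedgeCov 4 φ} := by
        apply Submodule.subset_span
        refine ⟨_, ?_, wedge_comp _ P0⟩
        intro i
        simp [hP07]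
      have hlin : (stdG2star b).compLinearMap P0 =
          (bw b 0 1 2 3).compLinearMap P0 - (bw b 0 1 4 5).compLinearMap P0
          - (bw b 2 3 4 5).compLinearMap P0 - (bw b 1 3 5 6).compLinearMap P0
          + (bw b 1 2 4 6).compLinearMap P0 + (bw b 0 3 4 6).compLinearMap P0
          + (bw b 0 2 5 6).compLinearMap P0 := rfl
      unfold mem4Pow
      rw [hlin]
      exact add_mem (add_mem (add_mem (sub_mem (sub_mem (sub_mem (key _ _ _ _) (key _ _ _ _))
        (key _ _ _ _)) (key _ _ _ _)) (key _ _ _ _)) (key _ _ _ _)) (key _ _ _ _)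
    · rintro ⟨Y, hY, hΩ⟩
      obtain ⟨φ, hφ⟩ := hY 0
      have hΩ' : (stdG2star b).compLinearMap P0 = wedgeCov 4 φ := by
        rw [hΩ, ← hφ]; simp
      obtain ⟨x, hxU, hx0, hxφ⟩ : ∃ x, x ∈ u ∧ x ≠ 0 ∧ ∀ i, φ i x = 0 := by
        let L : U →ₗ[ℝ] (Fin 4 → ℝ) := (LinearMap.pi φ) ∘ₗ U.subtype
        have h1 := L.finrank_range_add_finrank_ker
        have h2 : finrank ℝ (LinearMap.range L) ≤ 4 := by
          simpa using (LinearMap.range L).finrank_le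
        have : Nontrivial (LinearMap.ker L) := nontrivial_of_finrank_pos (R := ℝ) (by omega)
        obtain ⟨x, hx⟩ := exists_ne (0 : LinearMap.ker L)
        refine ⟨x.1.1, (hmem _).2 x.1.2, fun h => hx (by ext; exact h), fun i => ?_⟩
        exact congrFun (LinearMap.mem_ker.1 x.2) i
      refine hx0 (g2nondeg b f e₇ hf7 x fun y1 y2 y3 h1 h2 h3 => ?_)
      have h4 : stdG2star b ![x, y1, y2, y3] = wedgeCov 4 φ ![x, y1, y2, y3] := by
        rw [← hΩ', AlternatingMap.compLinearMap_apply]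
        rw [← hfu] at h1 h2 h3
        congr 1
        funext i
        fin_cases i <;> simp [hP0id x hxU, hP0id y1 h1, hP0id y2 h2, hP0id y3 h3]
      rw [h4]
      have h5 : φ = ![φ 0, φ 1, φ 2, φ 3] := by funext i; fin_cases i <;> rfl
      rw [h5, w4]
      simp [hxφ]
  · rintro ⟨Ω, hcl, hm, hlen⟩
    have hΩP : Ω.compLinearMap P0 = Ω := by
      clear hcl hlen
      unfold mem4Pow at hm
      induction hm using Submodule.span_induction with
      | mem Y hY =>
        obtain ⟨φ, hφ, rfl⟩ := hY
        rw [wedge_comp]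
        congr 1
        funext i
        ext x
        have : φ i e₇ = 0 := hφ i
        simp [hP0, this]
      | zero => rfl
      | add x y _ _ hx hy => rw [AlternatingMap.add_compLinearMap, hx, hy]
      | smul a x _ hx =>
        conv_rhs => rw [← hx]
        rfl
    have hnf : NF (Ω.compLinearMap U.subtype) := by
      refine normalForm hU6 _ fun ⟨φ, hφ⟩ => hlen ⟨fun _ => Ω, fun _ => ⟨fun i => φ i ∘ₗ P, ?_⟩, by simp⟩
      rw [← wedge_comp, ← hφ]
      exact hΩP.symm
    obtain ⟨e, l, n, m, hl, hn, hA⟩ := hnf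
    obtain ⟨b, hb⟩ := exB hg (fun i => e.coord i ∘ₗ P) f (fun j => (e j : g)) e₇ (by
        intro i j
        have : P (e j) = e j := by
          ext; exact hP0id _ ((hmem _).2 (e j).2)
        simp [this, Finsupp.single_apply, eq_comm]) (by
        intro i
        have : P e₇ = 0 := by ext; exact hP07
        simp [this]) (fun j => hfU (e j).2) hf7 l n m hl hn
    refine ⟨stdG2star b, ?_, b, rfl⟩
    refine closedAgree u habel e₇ hdec Ω _ ?_ hcl
    intro x hx y hy z hz w hw
    rw [hb _ (by intro i; fin_cases i <;> simp [(hfu x).1 hx, (hfu y).1 hy, (hfu z).1 hz, (hfu w).1 hw])]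
    have h1 : Ω ![x, y, z, w] = (Ω.compLinearMap U.subtype) (fun i => P (![x, y, z, w] i)) := by
      conv_lhs => rw [← hΩP]
      rfl
    rw [h1, hA]
    simp only [AlternatingMap.add_apply, AlternatingMap.smul_apply, w4, smul_eq_mul]
    rfl
end

section
/- Let g be a seven-dimensional real Lie algebra with a six-dimensional abelian ideal u, let e₇ ∈ g∖u, and let ω ∈ Λ²u* be a nondegenerate two-form on u. Then g admits a cocalibrated G₂-structure — i.e. there exists a closed four-form Ψ ∈ Λ⁴g* such that for some basis f¹,…,f⁷ of g*, Ψ = f^{1234}+f^{1256}+f^{3456}−f^{2467}+f^{2357}+f^{1457}+f^{1367} — if and only if ad(e₇)|_u ∈ End(u) is similar under GL(u) to an element of sp(u,ω), i.e. there exists g ∈ GL(u) with g∘(ad(e₇)|_u)∘g⁻¹ ∈ sp(u,ω). -/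
open Module

theorem wedge4_apply {V : Type*} [AddCommGroup V] [Module ℝ V] (p q r s : Module.Dual ℝ V)
    (w x y z : V) : wedgeCov 4 ![p, q, r, s] ![w, x, y, z] =
    p w * (q x * (r y * s z - r z * s y) - q y * (r x * s z - r z * s x)
      + q z * (r x * s y - r y * s x))
    - q w * (p x * (r y * s z - r z * s y) - p y * (r x * s z - r z * s x)
      + p z * (r x * s y - r y * s x))
    + r w * (p x * (q y * s z - q z * s y) - p y * (q x * s z - q z * s x)
      + p z * (q x * s y - q y * s x))
    - s w * (p x * (q y * r z - q z * r y) - p y * (q x * r z - q z * r x)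
      + p z * (q x * r y - q y * r x)) := by
  have : wedgeCov 4 ![p, q, r, s] ![w, x, y, z] =
      Matrix.det !![p w, q w, r w, s w; p x, q x, r x, s x; p y, q y, r y, s y;
        p z, q z, r z, s z] := by
    unfold wedgeCov
    rw [AlternatingMap.compLinearMap_apply]
    change Matrix.det _ = _
    congr 1
    ext i j
    fin_cases i <;> fin_cases j <;> rfl
  rw [this]
  simp [Matrix.det_succ_row_zero, Fin.sum_univ_succ, Fin.succAbove]
  ring

theorem ceDiff3_apply {g : Type*} [LieRing g] [LieAlgebra ℝ g] (ρ : (Fin 4 → g) → ℝ)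
    (x0 x1 x2 x3 x4 : g) : ceDiff 3 ρ ![x0, x1, x2, x3, x4] =
      - ρ ![⁅x0, x1⁆, x2, x3, x4] + ρ ![⁅x0, x2⁆, x1, x3, x4] - ρ ![⁅x0, x3⁆, x1, x2, x4]
      + ρ ![⁅x0, x4⁆, x1, x2, x3] - ρ ![⁅x1, x2⁆, x0, x3, x4] + ρ ![⁅x1, x3⁆, x0, x2, x4]
      - ρ ![⁅x1, x4⁆, x0, x2, x3] - ρ ![⁅x2, x3⁆, x0, x1, x4] + ρ ![⁅x2, x4⁆, x0, x1, x3]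
      - ρ ![⁅x3, x4⁆, x0, x1, x2] := by
  have key : ∀ (i j : Fin 5) (h : (i : ℕ) < (j : ℕ)) (y0 y1 y2 y3 : g),
      y0 = ⁅![x0, x1, x2, x3, x4] i, ![x0, x1, x2, x3, x4] j⁆ →
      (∀ l : Fin 3, ![x0, x1, x2, x3, x4] (j.succAbove ((⟨(i : ℕ),
              Nat.lt_of_lt_of_le h (Nat.lt_succ_iff.mp j.isLt)⟩ : Fin (3 + 1)).succAbove l))
          = ![y1, y2, y3] l) →
      ρ (Fin.cons ⁅![x0, x1, x2, x3, x4] i, ![x0, x1, x2, x3, x4] j⁆ fun l : Fin 3 =>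
            ![x0, x1, x2, x3, x4] (j.succAbove ((⟨(i : ℕ),
              Nat.lt_of_lt_of_le h (Nat.lt_succ_iff.mp j.isLt)⟩ : Fin (3 + 1)).succAbove l)))
        = ρ ![y0, y1, y2, y3] := by
    intro i j h y0 y1 y2 y3 h0 h1
    congr 1
    rw [← h0]
    simp only [h1]
    rfl
  have k01 := key 0 1 (by decide) _ x2 x3 x4 rfl (by intro l; fin_cases l <;> rfl)
  have k02 := key 0 2 (by decide) _ x1 x3 x4 rfl (by intro l; fin_cases l <;> rfl)
  have k03 := key 0 3 (by decide) _ x1 x2 x4 rfl (by intro l; fin_cases l <;> rfl)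
  have k04 := key 0 4 (by decide) _ x1 x2 x3 rfl (by intro l; fin_cases l <;> rfl)
  have k12 := key 1 2 (by decide) _ x0 x3 x4 rfl (by intro l; fin_cases l <;> rfl)
  have k13 := key 1 3 (by decide) _ x0 x2 x4 rfl (by intro l; fin_cases l <;> rfl)
  have k14 := key 1 4 (by decide) _ x0 x2 x3 rfl (by intro l; fin_cases l <;> rfl)
  have k23 := key 2 3 (by decide) _ x0 x1 x4 rfl (by intro l; fin_cases l <;> rfl)
  have k24 := key 2 4 (by decide) _ x0 x1 x3 rfl (by intro l; fin_cases l <;> rfl)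
  have k34 := key 3 4 (by decide) _ x0 x1 x2 rfl (by intro l; fin_cases l <;> rfl)
  unfold ceDiff
  have S : ∀ f : Fin (3 + 2) → ℝ, ∑ i, f i =
      f (0 : Fin 5) + f (1 : Fin 5) + f (2 : Fin 5) + f (3 : Fin 5) + f (4 : Fin 5) :=
    fun f => Fin.sum_univ_five f
  simp only [S]
  rw [dif_neg (by decide), dif_pos (by decide), dif_pos (by decide), dif_pos (by decide),
    dif_pos (by decide), dif_neg (by decide), dif_neg (by decide), dif_pos (by decide),
    dif_pos (by decide), dif_pos (by decide), dif_neg (by decide), dif_neg (by decide),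
    dif_neg (by decide), dif_pos (by decide), dif_pos (by decide), dif_neg (by decide),
    dif_neg (by decide), dif_neg (by decide), dif_neg (by decide), dif_pos (by decide),
    dif_neg (by decide), dif_neg (by decide), dif_neg (by decide), dif_neg (by decide),
    dif_neg (by decide)]
  rw [k01, k02, k03, k04, k12, k13, k14, k23, k24, k34]
  have e0 : ((0 : Fin 5) : ℕ) = 0 := rfl
  have e1 : ((1 : Fin 5) : ℕ) = 1 := rfl
  have e2 : ((2 : Fin 5) : ℕ) = 2 := rfl
  have e3 : ((3 : Fin 5) : ℕ) = 3 := rfl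
  have e4 : ((4 : Fin 5) : ℕ) = 4 := rfl
  have v0 : ![x0, x1, x2, x3, x4] 0 = x0 := rfl
  have v1 : ![x0, x1, x2, x3, x4] 1 = x1 := rfl
  have v2 : ![x0, x1, x2, x3, x4] 2 = x2 := rfl
  have v3 : ![x0, x1, x2, x3, x4] 3 = x3 := rfl
  have v4 : ![x0, x1, x2, x3, x4] 4 = x4 := rfl
  simp only [e0, e1, e2, e3, e4, v0, v1, v2, v3, v4]
  ring

/-- A symplectic family can be built up to half the dimension. -/
theorem exists_sympl {V : Type*} [AddCommGroup V] [Module ℝ V] [FiniteDimensional ℝ V]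
    (B : V →ₗ[ℝ] V →ₗ[ℝ] ℝ) (halt : ∀ v, B v v = 0)
    (hnd : ∀ v, (∀ w, B v w = 0) → v = 0) (n : ℕ) (hn : 2 * n ≤ finrank ℝ V) :
    ∃ p q : Fin n → V, (∀ i j, B (p i) (p j) = 0) ∧ (∀ i j, B (q i) (q j) = 0) ∧
      (∀ i j, B (p i) (q j) = if i = j then 1 else 0) := by
  have hsk : ∀ v w, B v w = - B w v := by
    intro v w
    have := halt (v + w)
    simp only [map_add, LinearMap.add_apply, halt] at this
    linarith
  induction n with
  | zero => exact ⟨Fin.elim0, Fin.elim0, fun i => i.elim0, fun i => i.elim0, fun i => i.elim0⟩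
  | succ n ih =>
    obtain ⟨p, q, hpp, hqq, hpq⟩ := ih (by omega)
    have hqp : ∀ i j, B (q i) (p j) = if i = j then -1 else 0 := by
      intro i j
      rw [hsk, hpq]
      by_cases h : i = j
      · simp [h]
      · simp [h, Ne.symm h]
    -- the projection
    let P : V → V := fun x => x - ∑ i, (B x (q i)) • p i + ∑ i, (B x (p i)) • q i
    have hPp : ∀ x j, B (P x) (p j) = 0 := by
      intro x j
      simp [P, map_add, map_sub, map_sum, LinearMap.add_apply, LinearMap.sub_apply,
        LinearMap.sum_apply, hpp, hqp]
    have hPq : ∀ x j, B (P x) (q j) = 0 := by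
      intro x j
      simp [P, map_add, map_sub, map_sum, LinearMap.add_apply, LinearMap.sub_apply,
        LinearMap.sum_apply, hqq, hpq]
    obtain ⟨x, hx⟩ : ∃ x, P x ≠ 0 := by
      by_contra! hcon
      have hspan : (⊤ : Submodule ℝ V) ≤ Submodule.span ℝ (Set.range (Sum.elim p q)) := by
        intro x _
        have h1 : x = ∑ i, (B x (q i)) • p i - ∑ i, (B x (p i)) • q i := by
          have := hcon x
          simp only [P] at this
          rw [← sub_eq_zero, ← this]
          abel
        rw [h1]
        refine Submodule.sub_mem _ (Submodule.sum_mem _ fun i _ => Submodule.smul_mem _ _ ?_)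
          (Submodule.sum_mem _ fun i _ => Submodule.smul_mem _ _ ?_)
        · exact Submodule.subset_span ⟨Sum.inl i, rfl⟩
        · exact Submodule.subset_span ⟨Sum.inr i, rfl⟩
      have h2 := finrank_range_le_card (R := ℝ) (Sum.elim p q)
      have h3 : Submodule.span ℝ (Set.range (Sum.elim p q)) = ⊤ := top_le_iff.mp hspan
      unfold Set.finrank at h2
      rw [h3, finrank_top] at h2
      simp at h2
      omega
    obtain ⟨y, hy⟩ : ∃ y, B (P x) y ≠ 0 := by
      by_contra! hcon
      exact hx (hnd _ hcon)
    let y' := (B (P x) y)⁻¹ • P y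
    have hxy : B (P x) y' = 1 := by
      have : B (P x) (P y) = B (P x) y := by
        change B (P x) (y - ∑ i, (B y (q i)) • p i + ∑ i, (B y (p i)) • q i) = _
        simp only [map_add, map_sub, map_sum, map_smul, hPp, hPq]
        simp
      simp only [y', map_smul, this, smul_eq_mul]
      exact inv_mul_cancel₀ hy
    have hyp : ∀ j, B y' (p j) = 0 := by
      intro j; simp [y', hPp]
    have hyq : ∀ j, B y' (q j) = 0 := by
      intro j; simp [y', hPq]
    refine ⟨Fin.cons (P x) p, Fin.cons y' q, ?_, ?_, ?_⟩
    · intro i j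
      refine Fin.cases ?_ (fun i => ?_) i <;> refine Fin.cases ?_ (fun j => ?_) j
      · simp [halt]
      · simp [hPp]
      · simp only [Fin.cons_zero, Fin.cons_succ]; rw [hsk, hPp, neg_zero]
      · simp [hpp]
    · intro i j
      refine Fin.cases ?_ (fun i => ?_) i <;> refine Fin.cases ?_ (fun j => ?_) j
      · simp [halt]
      · simp [hyq]
      · simp only [Fin.cons_zero, Fin.cons_succ]; rw [hsk, hyq, neg_zero]
      · simp [hqq]
    · intro i j
      refine Fin.cases ?_ (fun i => ?_) i <;> refine Fin.cases ?_ (fun j => ?_) j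
      · simp [hxy]
      · simp [hPq, (Fin.succ_ne_zero _).symm]
      · simp only [Fin.cons_zero, Fin.cons_succ]; rw [hsk, hyp, neg_zero]; simp
      · simp [hpq]

/-- The standard symplectic matrix in the ordering `p₀ q₀ p₁ q₁ p₂ q₂`. -/
def J6 : Matrix (Fin 6) (Fin 6) ℝ :=
  !![0, 1, 0, 0, 0, 0; -1, 0, 0, 0, 0, 0; 0, 0, 0, 1, 0, 0; 0, 0, -1, 0, 0, 0;
    0, 0, 0, 0, 0, 1; 0, 0, 0, 0, -1, 0]

theorem exists_sympl_basis {V : Type*} [AddCommGroup V] [Module ℝ V] [FiniteDimensional ℝ V]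
    (h6 : finrank ℝ V = 6) (B : V →ₗ[ℝ] V →ₗ[ℝ] ℝ) (halt : ∀ v, B v v = 0)
    (hnd : ∀ v, (∀ w, B v w = 0) → v = 0) :
    ∃ c : Basis (Fin 6) ℝ V, ∀ i j, B (c i) (c j) = J6 i j := by
  obtain ⟨p, q, hpp, hqq, hpq⟩ := exists_sympl B halt hnd 3 (by omega)
  have hsk : ∀ v w, B v w = - B w v := by
    intro v w
    have := halt (v + w)
    simp only [map_add, LinearMap.add_apply, halt] at this
    linarith
  have hqp : ∀ i j, B (q i) (p j) = if i = j then -1 else 0 := by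
    intro i j
    rw [hsk, hpq]
    by_cases h : i = j
    · simp [h]
    · simp [h, Ne.symm h]
  let v : Fin 6 → V := ![p 0, q 0, p 1, q 1, p 2, q 2]
  have hv : ∀ i j, B (v i) (v j) = J6 i j := by
    intro i j
    fin_cases i <;> fin_cases j <;> simp [v, J6, hpp, hqq, hpq, hqp]
  have hli : LinearIndependent ℝ v := by
    rw [Fintype.linearIndependent_iff]
    intro a ha
    have key : ∀ j, ∑ i, a i * J6 i j = 0 := by
      intro j
      have : B (∑ i, a i • v i) (v j) = 0 := by rw [ha]; simp
      rw [← this]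
      simp [map_sum, LinearMap.sum_apply, hv]
    intro i
    have k0 := key 0
    have k1 := key 1
    have k2 := key 2
    have k3 := key 3
    have k4 := key 4
    have k5 := key 5
    simp [Fin.sum_univ_six, J6] at k0 k1 k2 k3 k4 k5
    fin_cases i <;> simpa
  refine ⟨basisOfLinearIndependentOfCardEqFinrank hli (by simp [h6]), ?_⟩
  intro i j
  simp [hv]

theorem sympl_equiv {V : Type*} [AddCommGroup V] [Module ℝ V] [FiniteDimensional ℝ V]
    (h6 : finrank ℝ V = 6) (B B' : V →ₗ[ℝ] V →ₗ[ℝ] ℝ) (halt : ∀ v, B v v = 0)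
    (hnd : ∀ v, (∀ w, B v w = 0) → v = 0) (halt' : ∀ v, B' v v = 0)
    (hnd' : ∀ v, (∀ w, B' v w = 0) → v = 0) :
    ∃ T : V ≃ₗ[ℝ] V, ∀ v w, B (T v) (T w) = B' v w := by
  obtain ⟨c, hc⟩ := exists_sympl_basis h6 B halt hnd
  obtain ⟨c', hc'⟩ := exists_sympl_basis h6 B' halt' hnd'
  refine ⟨c'.equiv c (Equiv.refl _), ?_⟩
  have : B.compl₁₂ (c'.equiv c (Equiv.refl _)).toLinearMap
      (c'.equiv c (Equiv.refl _)).toLinearMap = B' := by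
    refine c'.ext fun i => c'.ext fun j => ?_
    simp [hc, hc']
  intro v w
  rw [← this]
  simp

/-- The contraction of the dual three-vector with `a`. -/
def M7 (a : Fin 7 → ℝ) : Matrix (Fin 7) (Fin 7) ℝ :=
  !![0, a 6, a 4, -a 5, -a 2, a 3, -a 1;
    -a 6, 0, -a 5, -a 4, a 3, a 2, a 0;
    -a 4, a 5, 0, a 6, a 0, -a 1, -a 3;
    a 5, a 4, -a 6, 0, -a 1, -a 0, a 2;
    a 2, -a 3, -a 0, a 1, 0, a 6, -a 5;
    -a 3, -a 2, a 1, a 0, -a 6, 0, a 4;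
    a 1, -a 0, a 3, -a 2, a 5, -a 4, 0]

theorem M7_transpose (a : Fin 7 → ℝ) : (M7 a).transpose = - M7 a := by
  ext i j
  fin_cases i <;> fin_cases j <;> simp [M7]

theorem M7_sq (a : Fin 7 → ℝ) :
    M7 a * M7 a = Matrix.vecMulVec a a - (∑ i, a i ^ 2) • (1 : Matrix (Fin 7) (Fin 7) ℝ) := by
  ext i j
  fin_cases i <;> fin_cases j <;>
    simp [M7, Matrix.mul_apply, Fin.sum_univ_seven, Matrix.vecMulVec_apply] <;> ring

theorem M7_mulVec (a : Fin 7 → ℝ) : (M7 a).mulVec a = 0 := by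
  ext i
  fin_cases i <;>
    simp [M7, Matrix.mulVec, dotProduct, Fin.sum_univ_seven] <;> ring

open Matrix in
theorem M7_trace (a : Fin 7 → ℝ) (ha : a ≠ 0) (D : Matrix (Fin 7) (Fin 7) ℝ)
    (haD : a ᵥ* D = 0) (h : D * M7 a + M7 a * Dᵀ = D.trace • M7 a) :
    ∀ x y : Fin 7 → ℝ, a ⬝ᵥ x = 0 → a ⬝ᵥ y = 0 →
      (D *ᵥ x) ⬝ᵥ (M7 a *ᵥ y) + x ⬝ᵥ (M7 a *ᵥ (D *ᵥ y)) = 0 := by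
  set M := M7 a with hM
  set s := ∑ i, a i ^ 2 with hs
  have hs0 : s ≠ 0 := by
    intro h0
    apply ha
    ext i
    have := (Finset.sum_eq_zero_iff_of_nonneg (fun i _ => sq_nonneg (a i))).mp h0 i
      (Finset.mem_univ _)
    simpa using this
  have hsq : M * M = vecMulVec a a - s • (1 : Matrix (Fin 7) (Fin 7) ℝ) := M7_sq a
  have hDa : Dᵀ *ᵥ a = 0 := by rw [mulVec_transpose]; exact haD
  have haa : a ⬝ᵥ a = s := by simp [dotProduct, hs, sq]
  have ht : D.trace = 0 := by
    have h1 := congrArg (fun X => (X * M).trace) h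
    simp only [add_mul, trace_add, smul_mul, trace_smul, mul_assoc, hsq] at h1
    have h2 : (M * (Dᵀ * M)).trace = (Dᵀ * (M * M)).trace := by
      rw [trace_mul_comm, mul_assoc]
    rw [h2, hsq] at h1
    simp only [mul_sub, trace_sub, trace_smul,
      trace_one, mul_vecMulVec, hDa, trace_vecMulVec, haa, smul_eq_mul, Fintype.card_fin] at h1
    have h3 : D *ᵥ a ⬝ᵥ a = 0 := by
      rw [dotProduct_comm, dotProduct_mulVec, haD, zero_dotProduct]
    rw [h3] at h1
    simp at h1
    have h4 : s * D.trace = 0 := by linarith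
    exact (mul_eq_zero.mp h4).resolve_left hs0
  rw [ht, zero_smul] at h
  intro x y hx hy
  have hMx : ∀ z, a ⬝ᵥ z = 0 → M *ᵥ (M *ᵥ z) = (-s) • z := by
    intro z hz
    rw [mulVec_mulVec, hsq, sub_mulVec, vecMulVec_mulVec, hz]
    simp [smul_mulVec]
  have hsk : ∀ v w, v ⬝ᵥ (M *ᵥ w) = - ((M *ᵥ v) ⬝ᵥ w) := by
    intro v w
    rw [dotProduct_mulVec, ← mulVec_transpose, M7_transpose, neg_mulVec, neg_dotProduct]
  -- write `y = M y'`, with `y' = -s⁻¹ M y`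
  have key : (M *ᵥ x) ⬝ᵥ ((D * M + M * Dᵀ) *ᵥ (M *ᵥ y)) = 0 := by
    rw [h]; simp
  rw [add_mulVec, dotProduct_add, ← mulVec_mulVec, hMx y hy, ← mulVec_mulVec, hsk (M *ᵥ x),
    hMx x hx, mulVec_smul, dotProduct_smul, smul_dotProduct, dotProduct_mulVec x,
    vecMul_transpose] at key
  rw [hsk x]
  simp only [smul_eq_mul] at key
  have : s * ((D *ᵥ x) ⬝ᵥ (M *ᵥ y) + -((M *ᵥ x) ⬝ᵥ (D *ᵥ y))) = 0 := by linarith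
  exact (mul_eq_zero.mp this).resolve_left hs0

open Matrix in
theorem M7_nondeg (a : Fin 7 → ℝ) (ha : a ≠ 0) (x : Fin 7 → ℝ) (hx : a ⬝ᵥ x = 0)
    (h : ∀ y, a ⬝ᵥ y = 0 → x ⬝ᵥ (M7 a *ᵥ y) = 0) : x = 0 := by
  have hs0 : ∑ i, a i ^ 2 ≠ 0 := by
    intro h0
    apply ha
    ext i
    have := (Finset.sum_eq_zero_iff_of_nonneg (fun i _ => sq_nonneg (a i))).mp h0 i
      (Finset.mem_univ _)
    simpa using this
  have h1 := h (M7 a *ᵥ x) (by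
    rw [dotProduct_mulVec, ← mulVec_transpose, M7_transpose, neg_mulVec, M7_mulVec]; simp)
  rw [mulVec_mulVec, M7_sq, sub_mulVec, vecMulVec_mulVec, hx] at h1
  simp [smul_mulVec] at h1
  exact h1.resolve_left hs0

set_option maxHeartbeats 4000000 in
theorem closed_coord {g : Type*} [LieRing g] [LieAlgebra ℝ g]
    (b : Basis (Fin 7) ℝ (Module.Dual ℝ g)) (e : Fin 7 → g)
    (hb : ∀ i j, b i (e j) = if i = j then 1 else 0) (α : Module.Dual ℝ g) (D : g →ₗ[ℝ] g)
    (hbr : ∀ x y, ⁅x, y⁆ = α x • D y - α y • D x)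
    (a : Fin 7 → ℝ) (ha : ∀ i, a i = α (e i)) (N : Matrix (Fin 7) (Fin 7) ℝ)
    (hN : ∀ i j, N i j = b i (D (e j))) (haN : ∀ j, ∑ i, a i * N i j = 0)
    (hcl : ceDiff 3 (stdG2 b) = 0) :
    N * M7 a + M7 a * N.transpose = N.trace • M7 a := by
  have hlin : ∀ (x y z v w : g), stdG2 b ![⁅x, y⁆, z, v, w] =
      α x * stdG2 b ![D y, z, v, w] - α y * stdG2 b ![D x, z, v, w] := by
    intro x y z v w
    rw [hbr]
    simp only [stdG2, bw, AlternatingMap.add_apply, AlternatingMap.sub_apply, wedge4_apply,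
      map_sub, map_smul, smul_eq_mul]
    ring
  have t012 : ∀ w, stdG2 b ![w, e 0, e 1, e 2] = -b 3 w := by
    intro w; simp [stdG2, bw, wedge4_apply, hb]
  have t013 : ∀ w, stdG2 b ![w, e 0, e 1, e 3] = b 2 w := by
    intro w; simp [stdG2, bw, wedge4_apply, hb]
  have t014 : ∀ w, stdG2 b ![w, e 0, e 1, e 4] = -b 5 w := by
    intro w; simp [stdG2, bw, wedge4_apply, hb]
  have t015 : ∀ w, stdG2 b ![w, e 0, e 1, e 5] = b 4 w := by
    intro w; simp [stdG2, bw, wedge4_apply, hb]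
  have t016 : ∀ w, stdG2 b ![w, e 0, e 1, e 6] = 0 := by
    intro w; simp [stdG2, bw, wedge4_apply, hb]
  have t023 : ∀ w, stdG2 b ![w, e 0, e 2, e 3] = -b 1 w := by
    intro w; simp [stdG2, bw, wedge4_apply, hb]
  have t024 : ∀ w, stdG2 b ![w, e 0, e 2, e 4] = 0 := by
    intro w; simp [stdG2, bw, wedge4_apply, hb]
  have t025 : ∀ w, stdG2 b ![w, e 0, e 2, e 5] = -b 6 w := by
    intro w; simp [stdG2, bw, wedge4_apply, hb]
  have t026 : ∀ w, stdG2 b ![w, e 0, e 2, e 6] = b 5 w := by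
    intro w; simp [stdG2, bw, wedge4_apply, hb]
  have t034 : ∀ w, stdG2 b ![w, e 0, e 3, e 4] = -b 6 w := by
    intro w; simp [stdG2, bw, wedge4_apply, hb]
  have t035 : ∀ w, stdG2 b ![w, e 0, e 3, e 5] = 0 := by
    intro w; simp [stdG2, bw, wedge4_apply, hb]
  have t036 : ∀ w, stdG2 b ![w, e 0, e 3, e 6] = b 4 w := by
    intro w; simp [stdG2, bw, wedge4_apply, hb]
  have t045 : ∀ w, stdG2 b ![w, e 0, e 4, e 5] = -b 1 w := by
    intro w; simp [stdG2, bw, wedge4_apply, hb]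
  have t046 : ∀ w, stdG2 b ![w, e 0, e 4, e 6] = -b 3 w := by
    intro w; simp [stdG2, bw, wedge4_apply, hb]
  have t056 : ∀ w, stdG2 b ![w, e 0, e 5, e 6] = -b 2 w := by
    intro w; simp [stdG2, bw, wedge4_apply, hb]
  have t123 : ∀ w, stdG2 b ![w, e 1, e 2, e 3] = b 0 w := by
    intro w; simp [stdG2, bw, wedge4_apply, hb]
  have t124 : ∀ w, stdG2 b ![w, e 1, e 2, e 4] = -b 6 w := by
    intro w; simp [stdG2, bw, wedge4_apply, hb]
  have t125 : ∀ w, stdG2 b ![w, e 1, e 2, e 5] = 0 := by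
    intro w; simp [stdG2, bw, wedge4_apply, hb]
  have t126 : ∀ w, stdG2 b ![w, e 1, e 2, e 6] = b 4 w := by
    intro w; simp [stdG2, bw, wedge4_apply, hb]
  have t134 : ∀ w, stdG2 b ![w, e 1, e 3, e 4] = 0 := by
    intro w; simp [stdG2, bw, wedge4_apply, hb]
  have t135 : ∀ w, stdG2 b ![w, e 1, e 3, e 5] = b 6 w := by
    intro w; simp [stdG2, bw, wedge4_apply, hb]
  have t136 : ∀ w, stdG2 b ![w, e 1, e 3, e 6] = -b 5 w := by
    intro w; simp [stdG2, bw, wedge4_apply, hb]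
  have t145 : ∀ w, stdG2 b ![w, e 1, e 4, e 5] = b 0 w := by
    intro w; simp [stdG2, bw, wedge4_apply, hb]
  have t146 : ∀ w, stdG2 b ![w, e 1, e 4, e 6] = -b 2 w := by
    intro w; simp [stdG2, bw, wedge4_apply, hb]
  have t156 : ∀ w, stdG2 b ![w, e 1, e 5, e 6] = b 3 w := by
    intro w; simp [stdG2, bw, wedge4_apply, hb]
  have t234 : ∀ w, stdG2 b ![w, e 2, e 3, e 4] = -b 5 w := by
    intro w; simp [stdG2, bw, wedge4_apply, hb]
  have t235 : ∀ w, stdG2 b ![w, e 2, e 3, e 5] = b 4 w := by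
    intro w; simp [stdG2, bw, wedge4_apply, hb]
  have t236 : ∀ w, stdG2 b ![w, e 2, e 3, e 6] = 0 := by
    intro w; simp [stdG2, bw, wedge4_apply, hb]
  have t245 : ∀ w, stdG2 b ![w, e 2, e 4, e 5] = -b 3 w := by
    intro w; simp [stdG2, bw, wedge4_apply, hb]
  have t246 : ∀ w, stdG2 b ![w, e 2, e 4, e 6] = b 1 w := by
    intro w; simp [stdG2, bw, wedge4_apply, hb]
  have t256 : ∀ w, stdG2 b ![w, e 2, e 5, e 6] = b 0 w := by
    intro w; simp [stdG2, bw, wedge4_apply, hb]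
  have t345 : ∀ w, stdG2 b ![w, e 3, e 4, e 5] = b 2 w := by
    intro w; simp [stdG2, bw, wedge4_apply, hb]
  have t346 : ∀ w, stdG2 b ![w, e 3, e 4, e 6] = b 0 w := by
    intro w; simp [stdG2, bw, wedge4_apply, hb]
  have t356 : ∀ w, stdG2 b ![w, e 3, e 5, e 6] = -b 1 w := by
    intro w; simp [stdG2, bw, wedge4_apply, hb]
  have t456 : ∀ w, stdG2 b ![w, e 4, e 5, e 6] = 0 := by
    intro w; simp [stdG2, bw, wedge4_apply, hb]
  have hcl' : ∀ x0 x1 x2 x3 x4 : g, ceDiff 3 (stdG2 b) ![x0, x1, x2, x3, x4] = 0 := by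
    intro x0 x1 x2 x3 x4; rw [hcl]; rfl
  have r : ∀ j, a 0 * N 0 j + a 1 * N 1 j + a 2 * N 2 j + a 3 * N 3 j + a 4 * N 4 j
      + a 5 * N 5 j + a 6 * N 6 j = 0 := by
    intro j; rw [← haN j, Fin.sum_univ_seven]
  have hN' : ∀ i j, b i (D (e j)) = N i j := fun i j => (hN i j).symm
  have ha' : ∀ i, α (e i) = a i := fun i => (ha i).symm
  set L := N * M7 a + M7 a * N.transpose - N.trace • M7 a with hL
  have hsk : L.transpose = - L := by
    rw [hL]
    simp only [Matrix.transpose_sub, Matrix.transpose_add, Matrix.transpose_mul,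
      Matrix.transpose_smul, M7_transpose, Matrix.transpose_transpose, smul_neg, Matrix.neg_mul,
      Matrix.mul_neg]
    abel
  have hsk' : ∀ i j, L i j = - L j i := by
    intro i j
    have := congrFun (congrFun hsk j) i
    simpa using this
  have hLe : ∀ i j, L i j = (∑ k, N i k * M7 a k j) + (∑ k, M7 a i k * N j k)
      - (∑ k, N k k) * M7 a i j := by
    intro i j
    rw [hL]
    simp only [Matrix.sub_apply, Matrix.add_apply, Matrix.smul_apply, Matrix.mul_apply,
      Matrix.transpose_apply, Matrix.trace, Matrix.diag_apply, smul_eq_mul]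
  clear_value L
  have hd : ∀ i, L i i = 0 := by
    intro i
    have := hsk' i i
    linarith
  have l01 : L 0 1 = 0 := by
    have h := hcl' (e 2) (e 3) (e 4) (e 5) (e 6)
    simp only [ceDiff3_apply, hlin, t234, t235, t236, t245, t246, t256, t345, t346, t356, t456,
      hN', ha'] at h
    rw [hLe]; simp [M7, Fin.sum_univ_seven]
    linear_combination h - r 6
  have l02 : L 0 2 = 0 := by
    have h := hcl' (e 1) (e 3) (e 4) (e 5) (e 6)
    simp only [ceDiff3_apply, hlin, t134, t135, t136, t145, t146, t156, t345, t346, t356, t456,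
      hN', ha'] at h
    rw [hLe]; simp [M7, Fin.sum_univ_seven]
    linear_combination -h - r 4
  have l03 : L 0 3 = 0 := by
    have h := hcl' (e 1) (e 2) (e 4) (e 5) (e 6)
    simp only [ceDiff3_apply, hlin, t124, t125, t126, t145, t146, t156, t245, t246, t256, t456,
      hN', ha'] at h
    rw [hLe]; simp [M7, Fin.sum_univ_seven]
    linear_combination h + r 5
  have l04 : L 0 4 = 0 := by
    have h := hcl' (e 1) (e 2) (e 3) (e 5) (e 6)
    simp only [ceDiff3_apply, hlin, t123, t125, t126, t135, t136, t156, t235, t236, t256, t356,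
      hN', ha'] at h
    rw [hLe]; simp [M7, Fin.sum_univ_seven]
    linear_combination -h + r 2
  have l05 : L 0 5 = 0 := by
    have h := hcl' (e 1) (e 2) (e 3) (e 4) (e 6)
    simp only [ceDiff3_apply, hlin, t123, t124, t126, t134, t136, t146, t234, t236, t246, t346,
      hN', ha'] at h
    rw [hLe]; simp [M7, Fin.sum_univ_seven]
    linear_combination h - r 3
  have l06 : L 0 6 = 0 := by
    have h := hcl' (e 1) (e 2) (e 3) (e 4) (e 5)
    simp only [ceDiff3_apply, hlin, t123, t124, t125, t134, t135, t145, t234, t235, t245, t345,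
      hN', ha'] at h
    rw [hLe]; simp [M7, Fin.sum_univ_seven]
    linear_combination -h + r 1
  have l12 : L 1 2 = 0 := by
    have h := hcl' (e 0) (e 3) (e 4) (e 5) (e 6)
    simp only [ceDiff3_apply, hlin, t034, t035, t036, t045, t046, t056, t345, t346, t356, t456,
      hN', ha'] at h
    rw [hLe]; simp [M7, Fin.sum_univ_seven]
    linear_combination h + r 5
  have l13 : L 1 3 = 0 := by
    have h := hcl' (e 0) (e 2) (e 4) (e 5) (e 6)
    simp only [ceDiff3_apply, hlin, t024, t025, t026, t045, t046, t056, t245, t246, t256, t456,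
      hN', ha'] at h
    rw [hLe]; simp [M7, Fin.sum_univ_seven]
    linear_combination -h + r 4
  have l14 : L 1 4 = 0 := by
    have h := hcl' (e 0) (e 2) (e 3) (e 5) (e 6)
    simp only [ceDiff3_apply, hlin, t023, t025, t026, t035, t036, t056, t235, t236, t256, t356,
      hN', ha'] at h
    rw [hLe]; simp [M7, Fin.sum_univ_seven]
    linear_combination h - r 3
  have l15 : L 1 5 = 0 := by
    have h := hcl' (e 0) (e 2) (e 3) (e 4) (e 6)
    simp only [ceDiff3_apply, hlin, t023, t024, t026, t034, t036, t046, t234, t236, t246, t346,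
      hN', ha'] at h
    rw [hLe]; simp [M7, Fin.sum_univ_seven]
    linear_combination -h - r 2
  have l16 : L 1 6 = 0 := by
    have h := hcl' (e 0) (e 2) (e 3) (e 4) (e 5)
    simp only [ceDiff3_apply, hlin, t023, t024, t025, t034, t035, t045, t234, t235, t245, t345,
      hN', ha'] at h
    rw [hLe]; simp [M7, Fin.sum_univ_seven]
    linear_combination h - r 0
  have l23 : L 2 3 = 0 := by
    have h := hcl' (e 0) (e 1) (e 4) (e 5) (e 6)
    simp only [ceDiff3_apply, hlin, t014, t015, t016, t045, t046, t056, t145, t146, t156, t456,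
      hN', ha'] at h
    rw [hLe]; simp [M7, Fin.sum_univ_seven]
    linear_combination h - r 6
  have l24 : L 2 4 = 0 := by
    have h := hcl' (e 0) (e 1) (e 3) (e 5) (e 6)
    simp only [ceDiff3_apply, hlin, t013, t015, t016, t035, t036, t056, t135, t136, t156, t356,
      hN', ha'] at h
    rw [hLe]; simp [M7, Fin.sum_univ_seven]
    linear_combination -h - r 0
  have l25 : L 2 5 = 0 := by
    have h := hcl' (e 0) (e 1) (e 3) (e 4) (e 6)
    simp only [ceDiff3_apply, hlin, t013, t014, t016, t034, t036, t046, t134, t136, t146, t346,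
      hN', ha'] at h
    rw [hLe]; simp [M7, Fin.sum_univ_seven]
    linear_combination h + r 1
  have l26 : L 2 6 = 0 := by
    have h := hcl' (e 0) (e 1) (e 3) (e 4) (e 5)
    simp only [ceDiff3_apply, hlin, t013, t014, t015, t034, t035, t045, t134, t135, t145, t345,
      hN', ha'] at h
    rw [hLe]; simp [M7, Fin.sum_univ_seven]
    linear_combination -h + r 3
  have l34 : L 3 4 = 0 := by
    have h := hcl' (e 0) (e 1) (e 2) (e 5) (e 6)
    simp only [ceDiff3_apply, hlin, t012, t015, t016, t025, t026, t056, t125, t126, t156, t256,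
      hN', ha'] at h
    rw [hLe]; simp [M7, Fin.sum_univ_seven]
    linear_combination h + r 1
  have l35 : L 3 5 = 0 := by
    have h := hcl' (e 0) (e 1) (e 2) (e 4) (e 6)
    simp only [ceDiff3_apply, hlin, t012, t014, t016, t024, t026, t046, t124, t126, t146, t246,
      hN', ha'] at h
    rw [hLe]; simp [M7, Fin.sum_univ_seven]
    linear_combination -h + r 0
  have l36 : L 3 6 = 0 := by
    have h := hcl' (e 0) (e 1) (e 2) (e 4) (e 5)
    simp only [ceDiff3_apply, hlin, t012, t014, t015, t024, t025, t045, t124, t125, t145, t245,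
      hN', ha'] at h
    rw [hLe]; simp [M7, Fin.sum_univ_seven]
    linear_combination h - r 2
  have l45 : L 4 5 = 0 := by
    have h := hcl' (e 0) (e 1) (e 2) (e 3) (e 6)
    simp only [ceDiff3_apply, hlin, t012, t013, t016, t023, t026, t036, t123, t126, t136, t236,
      hN', ha'] at h
    rw [hLe]; simp [M7, Fin.sum_univ_seven]
    linear_combination h - r 6
  have l46 : L 4 6 = 0 := by
    have h := hcl' (e 0) (e 1) (e 2) (e 3) (e 5)
    simp only [ceDiff3_apply, hlin, t012, t013, t015, t023, t025, t035, t123, t125, t135, t235,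
      hN', ha'] at h
    rw [hLe]; simp [M7, Fin.sum_univ_seven]
    linear_combination -h + r 5
  have l56 : L 5 6 = 0 := by
    have h := hcl' (e 0) (e 1) (e 2) (e 3) (e 4)
    simp only [ceDiff3_apply, hlin, t012, t013, t014, t023, t024, t034, t123, t124, t134, t234,
      hN', ha'] at h
    rw [hLe]; simp [M7, Fin.sum_univ_seven]
    linear_combination h - r 4
  have hL0 : L = 0 := by
    have hlt : ∀ i j : Fin 7, i < j → L i j = 0 := by
      intro i j hij
      fin_cases i <;> fin_cases j <;> first | assumption | (exact absurd hij (by decide))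
    ext i j
    rcases lt_trichotomy i j with h | h | h
    · exact hlt i j h
    · rw [h]; exact hd j
    · rw [hsk', hlt j i h]; simp
  rw [hL] at hL0
  exact sub_eq_zero.mp hL0

/-- Closedness of the standard form from invariance of the two-form. -/
theorem closed_of_inv {g : Type*} [LieRing g] [LieAlgebra ℝ g]
    (b : Basis (Fin 7) ℝ (Module.Dual ℝ g)) (D : g →ₗ[ℝ] g)
    (hbr : ∀ x y, ⁅x, y⁆ = b 6 x • D y - b 6 y • D x) (h6 : ∀ x, b 6 (D x) = 0)
    (σ : g → g → ℝ) (hσ : ∀ x y, σ x y = (b 0 x * b 1 y - b 1 x * b 0 y)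
      + (b 2 x * b 3 y - b 3 x * b 2 y) + (b 4 x * b 5 y - b 5 x * b 4 y))
    (hinv : ∀ x y, σ (D x) y + σ x (D y) = 0) : ceDiff 3 (stdG2 b) = 0 := by
  obtain ⟨ρ, hρ⟩ : ∃ ρ : g → g → g → ℝ, ∀ w x y z, stdG2 b ![w, x, y, z] =
      σ w x * σ y z - σ w y * σ x z + σ w z * σ x y
      + b 6 w * ρ x y z - b 6 x * ρ w y z + b 6 y * ρ w x z - b 6 z * ρ w x y := by
    let d : Fin 7 → Fin 7 → Fin 7 → g → g → g → ℝ := fun i j k x y z =>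
      b i x * (b j y * b k z - b j z * b k y) - b i y * (b j x * b k z - b j z * b k x)
        + b i z * (b j x * b k y - b j y * b k x)
    refine ⟨fun x y z => d 1 3 5 x y z - d 1 2 4 x y z - d 0 3 4 x y z - d 0 2 5 x y z, ?_⟩
    intro w x y z
    simp only [stdG2, bw, AlternatingMap.add_apply, AlternatingMap.sub_apply, wedge4_apply, hσ, d]
    ring
  have hlin : ∀ (x y z v w : g), stdG2 b ![⁅x, y⁆, z, v, w] =
      b 6 x * stdG2 b ![D y, z, v, w] - b 6 y * stdG2 b ![D x, z, v, w] := by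
    intro x y z v w
    rw [hbr]
    simp only [stdG2, bw, AlternatingMap.add_apply, AlternatingMap.sub_apply, wedge4_apply,
      map_sub, map_smul, smul_eq_mul]
    ring
  have hsw : ∀ x y, σ (D y) x = σ (D x) y := by
    intro x y
    have h1 := hinv x y
    have h2 : σ (D y) x = - σ x (D y) := by rw [hσ, hσ]; ring
    linarith
  funext x
  have hx : x = ![x 0, x 1, x 2, x 3, x 4] := by
    ext i; fin_cases i <;> rfl
  rw [hx, ceDiff3_apply]
  simp only [hlin, hρ, h6]
  rw [hsw (x 0) (x 1), hsw (x 0) (x 2), hsw (x 0) (x 3), hsw (x 0) (x 4), hsw (x 1) (x 2),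
    hsw (x 1) (x 3), hsw (x 1) (x 4), hsw (x 2) (x 3), hsw (x 2) (x 4), hsw (x 3) (x 4)]
  simp only [Pi.zero_apply]
  ring

set_option maxHeartbeats 4000000 in
/-- Let `g` be a seven-dimensional real Lie algebra with a
six-dimensional abelian ideal `u`, `e₇ ∈ g ∖ u`, and let `ω ∈ Λ²u*` be a nondegenerate
two-form on `u`.  Then `g` admits a cocalibrated `G₂`-structure (a closed four-form of
the standard type `stdG2`) iff `ad(e₇)|_u` is similar under `GL(u)` to an element of
`sp(u,ω)`. -/
theorem stmt16 {g : Type*} [LieRing g] [LieAlgebra ℝ g] [FiniteDimensional ℝ g]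
    (hg : finrank ℝ g = 7)
    (u : LieIdeal ℝ g) (habel : ∀ x ∈ u, ∀ y ∈ u, ⁅x, y⁆ = (0 : g))
    (hu : finrank ℝ ↥u = 6) (e₇ : g) (he : e₇ ∉ u)
    (ω : ↥u →ₗ[ℝ] ↥u →ₗ[ℝ] ℝ) (halt : ∀ v : ↥u, ω v v = 0)
    (hnd : ∀ v : ↥u, (∀ w : ↥u, ω v w = 0) → v = 0)
    (adE : ↥u →ₗ[ℝ] ↥u) (hadE : ∀ x : ↥u, (adE x : g) = ⁅e₇, (x : g)⁆) :
    (∃ Ψ : g [⋀^Fin 4]→ₗ[ℝ] ℝ, ceDiff 3 ⇑Ψ = 0 ∧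
        ∃ b : Basis (Fin 7) ℝ (Module.Dual ℝ g), Ψ = stdG2 b) ↔
      ∃ T : ↥u ≃ₗ[ℝ] ↥u, ∀ v w : ↥u,
        ω ((T.toLinearMap ∘ₗ adE ∘ₗ T.symm.toLinearMap) v) w +
          ω v ((T.toLinearMap ∘ₗ adE ∘ₗ T.symm.toLinearMap) w) = 0 := by
  -- the covector with kernel `u`
  obtain ⟨α, hα1, hαu, hker⟩ : ∃ α : Module.Dual ℝ g, α e₇ = 1 ∧ (∀ x ∈ u, α x = 0) ∧
      ∀ x, x - α x • e₇ ∈ u := by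
    obtain ⟨f, hf, hfu⟩ := Submodule.exists_dual_map_eq_bot_of_notMem
      (p := u.toSubmodule) (x := e₇) he inferInstance
    have hle : u.toSubmodule ≤ LinearMap.ker f := by
      rw [LinearMap.le_ker_iff_map]; exact hfu
    have hfin : finrank ℝ (LinearMap.ker f) = 6 := by
      have h1 := LinearMap.finrank_range_add_finrank_ker f
      have h2 : LinearMap.range f = ⊤ := by
        refine LinearMap.range_eq_top.mpr (LinearMap.surjective_iff_ne_zero.mpr ?_)
        rintro rfl
        exact hf rfl
      rw [h2, finrank_top, hg, finrank_self] at h1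
      omega
    have heq : u.toSubmodule = LinearMap.ker f :=
      Submodule.eq_of_le_of_finrank_eq hle (by rw [hfin]; exact hu)
    refine ⟨(f e₇)⁻¹ • f, ?_, ?_, ?_⟩
    · simp [hf]
    · intro x hx
      have : f x = 0 := hle hx
      simp [this]
    · intro x
      change _ ∈ u.toSubmodule
      rw [heq, LinearMap.mem_ker]
      simp only [map_sub, map_smul, LinearMap.smul_apply, smul_eq_mul]
      field_simp
      ring
  obtain ⟨D, hD⟩ : ∃ D : g →ₗ[ℝ] g, ∀ x, D x = ⁅e₇, x⁆ := ⟨LieAlgebra.ad ℝ g e₇, fun x => rfl⟩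
  have hDu : ∀ x, D (x - α x • e₇) = D x := by
    intro x
    simp [hD]
  have hDmem : ∀ x, D x ∈ u := by
    intro x
    rw [← hDu x, hD]
    exact lie_mem_right ℝ g u _ _ (hker x)
  have hαD : ∀ x, α (D x) = 0 := fun x => hαu _ (hDmem x)
  have hbr : ∀ x y, ⁅x, y⁆ = α x • D y - α y • D x := by
    intro x y
    have h1 := habel _ (hker x) _ (hker y)
    simp only [sub_lie, lie_sub, smul_lie, lie_smul, lie_self, smul_zero, sub_zero] at h1
    rw [hD, hD]
    rw [← lie_skew x e₇] at h1
    rw [← sub_eq_zero, ← h1, smul_neg]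
    abel
  have hadD : ∀ x : ↥u, (adE x : g) = D x := fun x => by rw [hadE, hD]
  constructor
  · rintro ⟨Ψ, hcl, b, rfl⟩
    let e : Fin 7 → g := fun j => (Module.evalEquiv ℝ g).symm (b.dualBasis j)
    have hb : ∀ i j, b i (e j) = if i = j then 1 else 0 := by
      intro i j
      simp only [e]
      rw [Module.apply_evalEquiv_symm_apply, Basis.dualBasis_apply_self]
    have hsum : ∀ x, x = ∑ i, b i x • e i := by
      intro x
      apply (Module.evalEquiv ℝ g).injective
      refine b.ext fun k => ?_
      simp [hb]
    let a : Fin 7 → ℝ := fun i => α (e i)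
    let N : Matrix (Fin 7) (Fin 7) ℝ := fun i j => b i (D (e j))
    have hαs : ∀ x, α x = ∑ i, a i * b i x := by
      intro x
      conv_lhs => rw [hsum x]
      simp [a, mul_comm]
    have haN : ∀ j, ∑ i, a i * N i j = 0 := by
      intro j
      rw [← hαD (e j), hαs]
    have hmat := closed_coord b e hb α D hbr a (fun _ => rfl) N (fun _ _ => rfl) haN hcl
    have ha : a ≠ 0 := by
      intro h
      have := hαs e₇
      rw [hα1, h] at this
      simp at this
    let C : ↥u →ₗ[ℝ] (Fin 7 → ℝ) := LinearMap.pi fun i => (b i) ∘ₗ u.toSubmodule.subtype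
    have hC : ∀ (x : ↥u) i, C x i = b i (x : g) := fun _ _ => rfl
    have haC : ∀ x : ↥u, dotProduct a (C x) = 0 := by
      intro x
      rw [← hαu x x.2, hαs]
      rfl
    have hCA : ∀ x : ↥u, C (adE x) = N.mulVec (C x) := by
      intro x
      ext i
      rw [hC, hadD]
      conv_lhs => rw [hsum (x : g)]
      simp [Matrix.mulVec, dotProduct, N, hC, mul_comm]
    let ω0 : ↥u →ₗ[ℝ] ↥u →ₗ[ℝ] ℝ := (Matrix.toLinearMap₂' ℝ (M7 a)).compl₁₂ C C
    have hω0 : ∀ x y, ω0 x y = dotProduct (C x) ((M7 a).mulVec (C y)) := by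
      intro x y
      simp only [ω0, LinearMap.compl₁₂_apply]
      rw [Matrix.toLinearMap₂'_apply']
    have halt0 : ∀ x, ω0 x x = 0 := by
      intro x
      have : ω0 x x = - ω0 x x := by
        conv_lhs => rw [hω0, Matrix.dotProduct_mulVec, ← Matrix.mulVec_transpose, M7_transpose,
          Matrix.neg_mulVec, neg_dotProduct, dotProduct_comm, ← hω0]
      linarith
    have hnd0 : ∀ v, (∀ w, ω0 v w = 0) → v = 0 := by
      intro v hv
      have hz : C v = 0 := by
        refine M7_nondeg a ha _ (haC v) ?_
        intro y hy
        have hmem : ∑ i, y i • e i ∈ u := by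
          have h1 := hker (∑ i, y i • e i)
          have h2 : α (∑ i, y i • e i) = 0 := by
            rw [← hy]; simp [dotProduct, a, mul_comm]
          simpa [h2] using h1
        have h3 := hv ⟨_, hmem⟩
        rw [hω0] at h3
        have h4 : C ⟨_, hmem⟩ = y := by
          ext i
          rw [hC]
          simp [hb]
        rwa [h4] at h3
      apply Subtype.ext
      rw [hsum (v : g)]
      have : ∀ i, b i (v : g) = 0 := fun i => by rw [← hC, hz]; rfl
      simp [this]
    have hinv : ∀ x y, ω0 (adE x) y + ω0 x (adE y) = 0 := by
      intro x y
      rw [hω0, hω0, hCA, hCA]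
      exact M7_trace a ha N (funext fun j => haN j) hmat _ _ (haC x) (haC y)
    obtain ⟨T, hT⟩ := sympl_equiv hu ω ω0 halt hnd halt0 hnd0
    refine ⟨T, fun v w => ?_⟩
    have := hinv (T.symm v) (T.symm w)
    rw [← hT, ← hT] at this
    simpa using this
  · rintro ⟨T, hT⟩
    let ω' : ↥u →ₗ[ℝ] ↥u →ₗ[ℝ] ℝ := ω.compl₁₂ T.toLinearMap T.toLinearMap
    have hω' : ∀ v w, ω' v w = ω (T v) (T w) := fun v w => rfl
    obtain ⟨c, hc⟩ := exists_sympl_basis hu ω' (fun v => halt _) (by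
      intro v hv
      have : T v = 0 := hnd _ fun w => by
        have := hv (T.symm w)
        rw [hω'] at this
        simpa using this
      simpa using this)
    have hinv : ∀ v w, ω' (adE v) w + ω' v (adE w) = 0 := by
      intro v w
      have := hT (T v) (T w)
      simpa [hω'] using this
    let π : g →ₗ[ℝ] ↥u :=
      { toFun := fun x => ⟨x - α x • e₇, hker x⟩
        map_add' := fun x y => Subtype.ext (by
          simp only [map_add, add_smul, LieSubmodule.coe_add]; abel)
        map_smul' := fun r x => Subtype.ext (by
          simp [smul_sub, mul_smul]) }
    have hπ : ∀ x, (π x : g) = x - α x • e₇ := fun _ => rfl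
    have hπu : ∀ x : ↥u, π (x : g) = x := fun x => Subtype.ext (by
      rw [hπ, hαu x x.2]; simp)
    have hπe : π e₇ = 0 := Subtype.ext (by rw [hπ, hα1]; simp)
    have hπD : ∀ x, π (D x) = adE (π x) := fun x => Subtype.ext (by
      rw [hπ, hαD, hadD, hπ, hDu]; simp)
    let φ : Fin 7 → Module.Dual ℝ g := ![c.coord 0 ∘ₗ π, c.coord 1 ∘ₗ π, c.coord 2 ∘ₗ π,
      c.coord 3 ∘ₗ π, c.coord 4 ∘ₗ π, c.coord 5 ∘ₗ π, α]
    let E : Fin 7 → g := ![c 0, c 1, c 2, c 3, c 4, c 5, e₇]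
    have hφE : ∀ i j, φ i (E j) = if i = j then 1 else 0 := by
      have hαc : ∀ i, α (c i : g) = 0 := fun i => hαu _ (c i).2
      intro i j
      fin_cases i <;> fin_cases j <;> simp [φ, E, hπu, hπe, hα1, hαc]
    have hli : LinearIndependent ℝ φ := by
      rw [Fintype.linearIndependent_iff]
      intro r hr j
      have := congrArg (fun f : Module.Dual ℝ g => f (E j)) hr
      simpa [LinearMap.sum_apply, hφE] using this
    let b : Basis (Fin 7) ℝ (Module.Dual ℝ g) :=
      basisOfLinearIndependentOfCardEqFinrank hli (by
        rw [Subspace.dual_finrank_eq, hg]; simp)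
    have hb : ∀ i, b i = φ i := fun i => by simp [b]
    refine ⟨stdG2 b, ?_, b, rfl⟩
    have hb6 : b 6 = α := by rw [hb]; rfl
    refine closed_of_inv b D (by rw [hb6]; exact hbr) (by rw [hb6]; exact hαD)
      (fun x y => ω' (π x) (π y)) ?_ ?_
    · intro x y
      have h0 : ∀ z, b 0 z = c.repr (π z) 0 := fun z => by rw [hb]; rfl
      have h1 : ∀ z, b 1 z = c.repr (π z) 1 := fun z => by rw [hb]; rfl
      have h2 : ∀ z, b 2 z = c.repr (π z) 2 := fun z => by rw [hb]; rfl
      have h3 : ∀ z, b 3 z = c.repr (π z) 3 := fun z => by rw [hb]; rfl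
      have h4 : ∀ z, b 4 z = c.repr (π z) 4 := fun z => by rw [hb]; rfl
      have h5 : ∀ z, b 5 z = c.repr (π z) 5 := fun z => by rw [hb]; rfl
      rw [h0, h1, h2, h3, h4, h5, h0, h1, h2, h3, h4, h5]
      generalize π x = v
      generalize π y = w
      have hvw : ω' v w = ∑ i, ∑ j, c.repr v i * (c.repr w j * J6 i j) := by
        conv_lhs => rw [← c.sum_repr v, ← c.sum_repr w]
        simp only [map_sum, map_smul, LinearMap.sum_apply, LinearMap.smul_apply, hc,
          smul_eq_mul, Finset.mul_sum]
        rw [Finset.sum_comm]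
        exact Finset.sum_congr rfl fun i _ => Finset.sum_congr rfl fun j _ => by ring
      change ω' v w = _
      rw [hvw]
      simp [Fin.sum_univ_six, J6]
      ring
    · intro x y
      rw [hπD, hπD]
      exact hinv _ _
end
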